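/- For all m, n ≥ 0 there is a well-defined unital k-algebra homomorphism ι_{m,n} : R(m) ⊗_k R(n) → R(m+n) determined by e(ν) ⊗ e(ν′) ↦ e(ν∗ν′) (concatenation of sequences), x_k ⊗ 1 ↦ x_k, 1 ⊗ x_k ↦ x_{m+k}, τ_l ⊗ 1 ↦ τ_l, and 1 ⊗ τ_l ↦ τ_{m+l}; moreover R(m+n) is free both as a left module and as a right module over R(m) ⊗_k R(n) via ι_{m,n} (in particular ι_{m,n} is injective). -/

import Mathlib

/- ## Scaffold: Khovanov–Lauda–Rouquier algebras -/

open scoped TensorProduct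

/-- A symmetrizable Cartan datum together with the structure constants of the
family of polynomials `Q`. -/
structure CartanDatum (k : Type) [Field k] (I : Type) [Fintype I] [DecidableEq I] : Type where
  a : I → I → ℤ
  d : I → ℤ
  t : I → I → ℕ → ℕ → k
  a_diag : ∀ i, a i i = 2
  a_nonpos : ∀ i j, i ≠ j → a i j ≤ 0
  a_zero_iff : ∀ i j, a i j = 0 ↔ a j i = 0
  d_pos : ∀ i, 0 < d i
  symmetrize : ∀ i j, d i * a i j = d j * a j i
  t_symm : ∀ i j p q, t i j p q = t j i q p
  t_lead : ∀ i j, i ≠ j → t i j (-(a i j)).toNat 0 ≠ 0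

namespace KLR

variable {k : Type} [Field k] {I : Type} [Fintype I] [DecidableEq I]

/-- The symmetric bilinear form `(α_i, α_j) = d_i a_{ij}`. -/
def B (C : CartanDatum k I) (i j : I) : ℤ := C.d i * C.a i j

/-- Generators of the KLR algebra `R(n)`. -/
inductive Gen (I : Type) (n : ℕ) : Type
  | e (ν : Fin n → I) : Gen I n
  | x (a : Fin n) : Gen I n
  | tau (l : ℕ) (h : l + 1 < n) : Gen I n

variable (k) in
/-- The free algebra on the generators. -/
abbrev FA (I : Type) (n : ℕ) : Type := FreeAlgebra k (Gen I n)

variable (k) in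
def ge {n : ℕ} (ν : Fin n → I) : FA k I n := FreeAlgebra.ι k (Gen.e ν)

variable (k) in
def gx {n : ℕ} (a : Fin n) : FA k I n := FreeAlgebra.ι k (Gen.x a)

variable (k) in
def gt {n : ℕ} (l : ℕ) (h : l + 1 < n) : FA k I n := FreeAlgebra.ι k (Gen.tau l h)

/-- The polynomial `Q_{ij}(u,v)` evaluated on two elements of an algebra. -/
def Qel (C : CartanDatum k I) {A : Type} [Ring A] [Algebra k A] (i j : I) (u v : A) : A :=
  if i = j then 0 else
    ∑ p ∈ Finset.range ((-(C.a i j)).toNat + 1), ∑ q ∈ Finset.range ((-(C.a j i)).toNat + 1),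
      if C.d i * (p : ℤ) + C.d j * (q : ℤ) = -(C.d i * C.a i j) then
        C.t i j p q • (u ^ p * v ^ q) else 0

/-- The divided difference `(Q_{ij}(u,v) - Q_{ij}(w,v))/(u - w)` evaluated on elements. -/
def Qdiff (C : CartanDatum k I) {A : Type} [Ring A] [Algebra k A] (i j : I) (u v w : A) : A :=
  if i = j then 0 else
    ∑ p ∈ Finset.range ((-(C.a i j)).toNat + 1), ∑ q ∈ Finset.range ((-(C.a j i)).toNat + 1),
      if C.d i * (p : ℤ) + C.d j * (q : ℤ) = -(C.d i * C.a i j) then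
        C.t i j p q • ((∑ c ∈ Finset.range p, u ^ c * w ^ (p - 1 - c)) * v ^ q) else 0

/-- The defining relations of the KLR algebra `R(n)`. -/
inductive Rel (C : CartanDatum k I) (n : ℕ) : FA k I n → FA k I n → Prop
  | ee : ∀ ν ν' : Fin n → I, Rel C n (ge k ν * ge k ν') (if ν = ν' then ge k ν else 0)
  | esum : Rel C n (∑ ν : Fin n → I, ge k ν) 1
  | xx : ∀ a b : Fin n, Rel C n (gx k a * gx k b) (gx k b * gx k a)
  | xe : ∀ (a : Fin n) (ν : Fin n → I), Rel C n (gx k a * ge k ν) (ge k ν * gx k a)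
  | taue : ∀ (l : ℕ) (h : l + 1 < n) (ν : Fin n → I),
      Rel C n (gt k l h * ge k ν)
        (ge k (ν ∘ Equiv.swap (⟨l, Nat.lt_of_succ_lt h⟩ : Fin n) ⟨l + 1, h⟩) * gt k l h)
  | tautau : ∀ (l : ℕ) (h : l + 1 < n) (l' : ℕ) (h' : l' + 1 < n),
      (l + 1 < l' ∨ l' + 1 < l) →
      Rel C n (gt k l h * gt k l' h') (gt k l' h' * gt k l h)
  | tausq : ∀ (l : ℕ) (h : l + 1 < n) (ν : Fin n → I),
      Rel C n (gt k l h ^ 2 * ge k ν)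
        (Qel C (ν ⟨l, Nat.lt_of_succ_lt h⟩) (ν ⟨l + 1, h⟩)
          (gx k ⟨l, Nat.lt_of_succ_lt h⟩) (gx k ⟨l + 1, h⟩) * ge k ν)
  | taux : ∀ (l : ℕ) (h : l + 1 < n) (m : Fin n) (ν : Fin n → I),
      Rel C n ((gt k l h * gx k m
          - gx k (Equiv.swap (⟨l, Nat.lt_of_succ_lt h⟩ : Fin n) ⟨l + 1, h⟩ m) * gt k l h) * ge k ν)
        (if m = ⟨l, Nat.lt_of_succ_lt h⟩ ∧ ν ⟨l, Nat.lt_of_succ_lt h⟩ = ν ⟨l + 1, h⟩ then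
            -(ge k ν)
          else if m = (⟨l + 1, h⟩ : Fin n) ∧ ν ⟨l, Nat.lt_of_succ_lt h⟩ = ν ⟨l + 1, h⟩ then
            ge k ν
          else 0)
  | braid : ∀ (l : ℕ) (h2 : l + 2 < n) (ν : Fin n → I),
      Rel C n ((gt k (l + 1) h2 * gt k l (Nat.lt_of_succ_lt h2) * gt k (l + 1) h2
          - gt k l (Nat.lt_of_succ_lt h2) * gt k (l + 1) h2 * gt k l (Nat.lt_of_succ_lt h2))
          * ge k ν)
        (if ν ⟨l, Nat.lt_of_succ_lt (Nat.lt_of_succ_lt h2)⟩ = ν ⟨l + 2, h2⟩ then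
            Qdiff C (ν ⟨l, Nat.lt_of_succ_lt (Nat.lt_of_succ_lt h2)⟩)
              (ν ⟨l + 1, Nat.lt_of_succ_lt h2⟩)
              (gx k ⟨l, Nat.lt_of_succ_lt (Nat.lt_of_succ_lt h2)⟩)
              (gx k ⟨l + 1, Nat.lt_of_succ_lt h2⟩)
              (gx k ⟨l + 2, h2⟩) * ge k ν
          else 0)

/-- The Khovanov–Lauda–Rouquier algebra `R(n)`. -/
abbrev Alg (C : CartanDatum k I) (n : ℕ) : Type := RingQuot (Rel C n)

variable (C : CartanDatum k I)

/-- The generator `e(ν)` of `R(n)`. -/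
noncomputable def Ee {n : ℕ} (ν : Fin n → I) : Alg C n :=
  RingQuot.mkAlgHom k (Rel C n) (ge k ν)

/-- The generator `x_a` of `R(n)`. -/
noncomputable def Xx {n : ℕ} (a : Fin n) : Alg C n :=
  RingQuot.mkAlgHom k (Rel C n) (gx k a)

/-- The generator `τ_l` of `R(n)`. -/
noncomputable def Tt {n : ℕ} (l : ℕ) (h : l + 1 < n) : Alg C n :=
  RingQuot.mkAlgHom k (Rel C n) (gt k l h)

variable (I) in
/-- The height of `β = Σ k_i α_i`. -/
def ht (β : I → ℕ) : ℕ := ∑ i, β i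

/-- The content of a sequence `ν`. -/
def content {m : ℕ} (ν : Fin m → I) : I → ℕ :=
  fun i => (Finset.univ.filter (fun a => ν a = i)).card

/-- The set `I^β` of sequences of length `m` with content `β`. -/
def seqs (β : I → ℕ) (m : ℕ) : Finset (Fin m → I) :=
  Finset.univ.filter (fun ν => content ν = β)

/-- The central idempotent `e(β)` in `R(n)`. -/
noncomputable def eIdem (n : ℕ) (β : I → ℕ) : Alg C n := ∑ ν ∈ seqs β n, Ee C ν

/-- `β + α_i`. -/
def addA (β : I → ℕ) (i : I) : I → ℕ := fun j => β j + if j = i then 1 else 0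

/-- The idempotent `e(β, α_i)` of `R(n+1)` (sum over `ν ∈ I^{β+α_i}` with `ν_{n+1} = i`). -/
noncomputable def eR (n : ℕ) (β : I → ℕ) (i : I) : Alg C (n + 1) :=
  ∑ ν ∈ (seqs (addA β i) (n + 1)).filter (fun ν => ν (Fin.last n) = i), Ee C ν

/-- The idempotent `e(α_i, β)` of `R(n+1)` (sum over `ν ∈ I^{β+α_i}` with `ν_1 = i`). -/
noncomputable def eL (n : ℕ) (β : I → ℕ) (i : I) : Alg C (n + 1) :=
  ∑ ν ∈ (seqs (addA β i) (n + 1)).filter (fun ν => ν 0 = i), Ee C ν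

/-- The idempotent `e(β - α_i, α_i)` of `R(n)`: sum over `ν ∈ I^β` with last entry `i`;
this is `0` when the coefficient of `α_i` in `β` is `0` or `n = 0`. -/
noncomputable def eD (n : ℕ) (β : I → ℕ) (i : I) : Alg C n :=
  ∑ ν ∈ (seqs β n).filter (fun ν => if h : 0 < n then ν ⟨n - 1, Nat.sub_lt h one_pos⟩ = i
      else False), Ee C ν

/-- The relation collapsing `R(n)` to `R(β) = R(n)e(β)` (a unital ring with unit `e(β)`). -/
inductive URel (n : ℕ) (β : I → ℕ) : Alg C n → Alg C n → Prop
  | unit : URel n β (eIdem C n β) 1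

/-- The algebra `R(β)`, realized as the quotient of `R(n)` identifying `e(β)` with `1`. -/
abbrev bAlg (n : ℕ) (β : I → ℕ) : Type := RingQuot (URel C n β)

/-- The canonical projection `R(n) → R(β)`. -/
noncomputable def toB {n : ℕ} {β : I → ℕ} : Alg C n →ₐ[k] bAlg C n β :=
  RingQuot.mkAlgHom k (URel C n β)

/-- The element `a^Λ(x_1)` of `R(β)`. -/
noncomputable def aLam (Λ : I → ℕ) (n : ℕ) (β : I → ℕ) : bAlg C n β :=
  if h : 0 < n then
    ∑ ν ∈ seqs β n, (toB C (Xx C ⟨0, h⟩)) ^ (Λ (ν ⟨0, h⟩)) * toB C (Ee C ν)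
  else 0

/-- The cyclotomic relation. -/
inductive CRel (Λ : I → ℕ) (n : ℕ) (β : I → ℕ) : bAlg C n β → bAlg C n β → Prop
  | cyc : CRel Λ n β (aLam C Λ n β) 0

/-- The cyclotomic KLR algebra `R^Λ(β)`. -/
abbrev cAlg (Λ : I → ℕ) (n : ℕ) (β : I → ℕ) : Type := RingQuot (CRel C Λ n β)

/-- The canonical projection `R(β) → R^Λ(β)`. -/
noncomputable def toC {Λ : I → ℕ} {n : ℕ} {β : I → ℕ} : bAlg C n β →ₐ[k] cAlg C Λ n β :=
  RingQuot.mkAlgHom k (CRel C Λ n β)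

/-- The canonical projection `R(n) → R^Λ(β)`. -/
noncomputable def toCB (Λ : I → ℕ) {n : ℕ} {β : I → ℕ} : Alg C n →ₐ[k] cAlg C Λ n β :=
  (toC C).comp (toB C)

end KLR
namespace KLR

variable {k : Type} [Field k] {I : Type} [Fintype I] [DecidableEq I] (C : CartanDatum k I)

section Homs

/-- Characterization of the non-unital algebra homomorphism `R(n) → R(n+1)` adding `i`
on the right: `e(ν) ↦ e(ν∗(i))`, `x_a ↦ x_a e(…,α_i)`, `τ_l ↦ τ_l e(…,α_i)`,
where the relevant idempotent is supplied as `e`. -/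
def IsUpR {n : ℕ} (i : I) (e : Alg C (n + 1)) (φ : Alg C n →ₙₐ[k] Alg C (n + 1)) : Prop :=
  (∀ ν : Fin n → I, φ (Ee C ν) = Ee C (Fin.snoc ν i)) ∧
  (∀ a : Fin n, φ (Xx C a) = Xx C a.castSucc * e) ∧
  (∀ (l : ℕ) (h : l + 1 < n), φ (Tt C l h) = Tt C l (Nat.lt_succ_of_lt h) * e)

/-- Characterization of the non-unital algebra homomorphism `R(n) → R(n+1)` adding `i`
on the left: `e(ν) ↦ e((i)∗ν)`, `x_a ↦ x_{a+1} e(α_i,…)`, `τ_l ↦ τ_{l+1} e(α_i,…)`. -/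
def IsUpL {n : ℕ} (i : I) (e : Alg C (n + 1)) (φ : Alg C n →ₙₐ[k] Alg C (n + 1)) : Prop :=
  (∀ ν : Fin n → I, φ (Ee C ν) = Ee C (Fin.cons i ν)) ∧
  (∀ a : Fin n, φ (Xx C a) = Xx C a.succ * e) ∧
  (∀ (l : ℕ) (h : l + 1 < n), φ (Tt C l h) = Tt C (l + 1) (Nat.succ_lt_succ h) * e)

/-- Characterization of the non-unital homomorphism `R(β) → R(β+α_i)` (right version). -/
def IsUpRb {n : ℕ} {β γ' : I → ℕ} (i : I)
    (φ : bAlg C n β →ₙₐ[k] bAlg C (n + 1) γ') : Prop :=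
  (∀ ν : Fin n → I, φ (toB C (Ee C ν)) = toB C (Ee C (Fin.snoc ν i))) ∧
  (∀ a : Fin n, φ (toB C (Xx C a)) = toB C (Xx C a.castSucc * eR C n β i)) ∧
  (∀ (l : ℕ) (h : l + 1 < n),
    φ (toB C (Tt C l h)) = toB C (Tt C l (Nat.lt_succ_of_lt h) * eR C n β i))

/-- Characterization of the non-unital homomorphism `R(β) → R(β+α_i)` (left version). -/
def IsUpLb {n : ℕ} {β γ' : I → ℕ} (i : I)
    (φ : bAlg C n β →ₙₐ[k] bAlg C (n + 1) γ') : Prop :=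
  (∀ ν : Fin n → I, φ (toB C (Ee C ν)) = toB C (Ee C (Fin.cons i ν))) ∧
  (∀ a : Fin n, φ (toB C (Xx C a)) = toB C (Xx C a.succ * eL C n β i)) ∧
  (∀ (l : ℕ) (h : l + 1 < n),
    φ (toB C (Tt C l h)) = toB C (Tt C (l + 1) (Nat.succ_lt_succ h) * eL C n β i))

/-- Characterization of the non-unital homomorphism `R^Λ(β) → R^Λ(β+α_i)` (right version). -/
def IsUpRc (Λ : I → ℕ) {n : ℕ} {β γ' : I → ℕ} (i : I)
    (φ : cAlg C Λ n β →ₙₐ[k] cAlg C Λ (n + 1) γ') : Prop :=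
  (∀ ν : Fin n → I, φ (toCB C Λ (Ee C ν)) = toCB C Λ (Ee C (Fin.snoc ν i))) ∧
  (∀ a : Fin n, φ (toCB C Λ (Xx C a)) = toCB C Λ (Xx C a.castSucc * eR C n β i)) ∧
  (∀ (l : ℕ) (h : l + 1 < n),
    φ (toCB C Λ (Tt C l h)) = toCB C Λ (Tt C l (Nat.lt_succ_of_lt h) * eR C n β i))

end Homs

section Tensor

open scoped TensorProduct

variable (S B M : Type) [Ring S] [Algebra k S] [Ring B] [Algebra k B]
  [AddCommGroup M] [Module k M] [Module S M] [IsScalarTower k S M]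

variable (k) in
/-- The relation submodule defining the balanced tensor product `B ⊗_S M` where `S`
acts on `B` on the right through the (non-unital) homomorphism `φ : S → B`. -/
def TRel (φ : S →ₙₐ[k] B) : Submodule B (B ⊗[k] M) :=
  Submodule.span B {z | ∃ (b : B) (r : S) (m : M), z = (b * φ r) ⊗ₜ[k] m - b ⊗ₜ[k] (r • m)}

variable (k) in
/-- The balanced tensor product `B ⊗_S M` (over the homomorphism `φ : S → B`). -/
abbrev OT (φ : S →ₙₐ[k] B) : Type := (B ⊗[k] M) ⧸ TRel k S B M φ

variable (k) in
/-- The canonical projection onto the balanced tensor product. -/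
def OTmk (φ : S →ₙₐ[k] B) (z : B ⊗[k] M) : OT k S B M φ := Submodule.Quotient.mk z

end Tensor

section ESub

variable (A : Type) [Ring A] [Algebra k A] (N : Type) [AddCommGroup N] [Module k N]
  [Module A N] [IsScalarTower k A N]

variable (k) in
/-- Multiplication by `e` as a `k`-linear endomorphism of an `A`-module. -/
def eMap (e : A) : N →ₗ[k] N where
  toFun x := e • x
  map_add' x y := smul_add e x y
  map_smul' c x := by
    simp only [RingHom.id_apply]
    rw [← algebraMap_smul A c x, ← mul_smul, ← Algebra.commutes, mul_smul, algebraMap_smul]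

variable (k) in
/-- The `k`-submodule `eN` of an `A`-module `N`. -/
def eSub (e : A) : Submodule k N := LinearMap.range (eMap k A N e)

end ESub

section Grading

variable {A M : Type}

variable (k) in
/-- `𝒜` is an algebra grading of `A`. -/
def IsAlgGrading [Ring A] [Algebra k A] (𝒜 : ℤ → Submodule k A) : Prop :=
  (1 : A) ∈ 𝒜 0 ∧ (∀ {c₁ c₂ : ℤ} {a b : A}, a ∈ 𝒜 c₁ → b ∈ 𝒜 c₂ → a * b ∈ 𝒜 (c₁ + c₂)) ∧
    DirectSum.IsInternal 𝒜

variable (k) in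
/-- `gr` is a grading of the `A`-module `M` compatible with the algebra grading `𝒜`. -/
def IsModGrading [Ring A] [Algebra k A] [AddCommGroup M] [Module k M] [Module A M]
    (𝒜 : ℤ → Submodule k A) (gr : ℤ → Submodule k M) : Prop :=
  DirectSum.IsInternal gr ∧
    ∀ {c m : ℤ} {a : A} {x : M}, a ∈ 𝒜 c → x ∈ gr m → a • x ∈ gr (c + m)

end Grading

section KLRGrading

/-- The canonical grading property for `R(n)`-type quotients: images of `e(ν)` have degree 0,
`x_a e(ν)` has degree `(α_{ν_a}, α_{ν_a})`, and `τ_l e(ν)` has degree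
`-(α_{ν_l}, α_{ν_{l+1}})`.  Here `p : R(n) → A` is the canonical projection onto the
quotient under consideration. -/
def IsKLRGrading {n : ℕ} {A : Type} [Ring A] [Algebra k A] (p : Alg C n →ₐ[k] A)
    (𝒜 : ℤ → Submodule k A) : Prop :=
  IsAlgGrading k 𝒜 ∧
  (∀ ν : Fin n → I, p (Ee C ν) ∈ 𝒜 0) ∧
  (∀ (a : Fin n) (ν : Fin n → I), p (Xx C a * Ee C ν) ∈ 𝒜 (B C (ν a) (ν a))) ∧
  (∀ (l : ℕ) (h : l + 1 < n) (ν : Fin n → I),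
    p (Tt C l h * Ee C ν) ∈ 𝒜 (-(B C (ν ⟨l, Nat.lt_of_succ_lt h⟩) (ν ⟨l + 1, h⟩))))

end KLRGrading

end KLR
namespace KLR

open scoped TensorProduct

variable {k : Type} [Field k] {I : Type} [Fintype I] [DecidableEq I] (C : CartanDatum k I)

section IndGrading

variable (S B M : Type) [Ring S] [Algebra k S] [Ring B] [Algebra k B]
  [AddCommGroup M] [Module k M] [Module S M] [IsScalarTower k S M]

variable (k) in
/-- The induced grading on the balanced tensor product `B ⊗_S M`. -/
def otGr (φ : S →ₙₐ[k] B) (𝒜 : ℤ → Submodule k B) (gr : ℤ → Submodule k M)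
    (c : ℤ) : Submodule k (OT k S B M φ) :=
  Submodule.span k {z | ∃ (c₁ c₂ : ℤ) (b : B) (m : M),
    c₁ + c₂ = c ∧ b ∈ 𝒜 c₁ ∧ m ∈ gr c₂ ∧ z = OTmk k S B M φ (b ⊗ₜ[k] m)}

end IndGrading

section ESubGrading

variable (A N : Type) [Ring A] [Algebra k A] [AddCommGroup N] [Module k N]
  [Module A N] [IsScalarTower k A N]

variable (k) in
/-- The induced grading on the submodule `eN ⊆ N`. -/
def eSubGr (e : A) (gr : ℤ → Submodule k N) (c : ℤ) : Submodule k ↥(eSub k A N e) :=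
  (gr c).comap (eSub k A N e).subtype

end ESubGrading

section Instances

variable (n : ℕ) (β : I → ℕ) (Λ : I → ℕ)

noncomputable instance : Module (bAlg C n β) (cAlg C Λ n β) :=
  Module.compHom _ (toC C (Λ := Λ) (n := n) (β := β)).toRingHom

instance : IsScalarTower k (bAlg C n β) (cAlg C Λ n β) := by
  constructor
  intro c s m
  show (toC C (c • s)) * m = c • (toC C s * m)
  rw [map_smul, Algebra.smul_mul_assoc]

end Instances


end KLR
namespace KLR

open scoped TensorProduct

variable {k : Type} [Field k] {I : Type} [Fintype I] [DecidableEq I] (C : CartanDatum k I)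

/-- `⟨h_i, β⟩ = Σ_j k_j a_{ij}`. -/
def pairH (i : I) (β : I → ℕ) : ℤ := ∑ j, (β j : ℤ) * C.a i j

/-- `(α_i, β) = Σ_j k_j (α_i, α_j)`. -/
def pairB (i : I) (β : I → ℕ) : ℤ := ∑ j, (β j : ℤ) * B C i j

/-- The ordered product `τ_1 τ_2 ⋯ τ_n` in `R(β+α_i)`-type quotients. -/
noncomputable def tauProd (n : ℕ) (γ : I → ℕ) : bAlg C (n + 1) γ :=
  (List.ofFn (fun l : Fin n => toB C (Tt C l.val (Nat.succ_lt_succ l.isLt)))).prod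

/-- The right ideal `Ae` as a `k`-submodule. -/
noncomputable def rId {A : Type} [Ring A] [Algebra k A] (e : A) : Submodule k A :=
  LinearMap.range (LinearMap.mulRight k e)

/-- The left ideal `eA` as a `k`-submodule. -/
noncomputable def lId {A : Type} [Ring A] [Algebra k A] (e : A) : Submodule k A :=
  LinearMap.range (LinearMap.mulLeft k e)

variable (k) in
/-- Characterization of the module structure on `eN` over `S'` acting through
the (non-unital) homomorphism `φ : S' → A`. -/
def IsEAction {A N S' : Type} [Ring A] [Algebra k A] [AddCommGroup N] [Module k N]
    [Module A N] [IsScalarTower k A N] [Ring S'] [Algebra k S']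
    (e : A) (φ : S' →ₙₐ[k] A) (inst : Module S' ↥(eSub k A N e)) : Prop :=
  letI := inst
  ∀ (r : S') (x : ↥(eSub k A N e)), ((r • x : ↥(eSub k A N e)) : N) = φ r • (x : N)

end KLR

/-!
Let `K` be the field of fractions of `k[X_1, …, X_N]`. The algebra `R(N)` acts on the space of
functions from the symmetric group to `K`, of dimension `N!`, with `x_a` acting diagonally by
permuted variables and `τ_l` by divided differences or by multiples of simple transpositions. The
first rows of the matrices by which `R(N)` acts span the dual space, so `N!` elements generating
`R(N)` over the polynomials `⨁_ν k[X_1, …, X_N] e(ν)` are independent.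

A filtration argument based on the braid relation shows that `R(m+n)` is generated over
`R(m) ⊗ R(n)` by the elements `τ_w`, for the `(m+n)! / (m! n!)` shuffles `w`. Hence generating
families of cardinality `m!` and `n!` for `R(m)` and `R(n)` yield one of cardinality `(m+n)!` for
`R(m+n)`. By induction (with `n = 1`) such families exist; they are independent, and thus so are
the `τ_w` over `R(m) ⊗ R(n)`. The right-handed statement follows by the anti-involution fixing
the generators.
-/

namespace KLR

/-! ### Families satisfying the defining relations -/

section Crossing

variable {I : Type} {N : ℕ}

/-- The simple transposition exchanging `l` and `l + 1`. -/
abbrev simpleSwap (l : ℕ) (h : l + 1 < N) : Equiv.Perm (Fin N) :=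
  Equiv.swap ⟨l, Nat.lt_of_succ_lt h⟩ ⟨l + 1, h⟩

variable [DecidableEq I]

/-- The integer by which `τ_l x_a - x_{s_l(a)} τ_l` acts on `e(ν)`. -/
def crossingSign (l : ℕ) (h : l + 1 < N) (a : Fin N) (ν : Fin N → I) : ℤ :=
  if ν ⟨l, Nat.lt_of_succ_lt h⟩ = ν ⟨l + 1, h⟩ then
    if a = ⟨l, Nat.lt_of_succ_lt h⟩ then -1 else if a = ⟨l + 1, h⟩ then 1 else 0
  else 0

theorem crossingSign_smul {M : Type} [AddCommGroup M] (l : ℕ) (h : l + 1 < N) (a : Fin N)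
    (ν : Fin N → I) (z : M) :
    crossingSign l h a ν • z =
      if a = ⟨l, Nat.lt_of_succ_lt h⟩ ∧ ν ⟨l, Nat.lt_of_succ_lt h⟩ = ν ⟨l + 1, h⟩ then -z
      else if a = ⟨l + 1, h⟩ ∧ ν ⟨l, Nat.lt_of_succ_lt h⟩ = ν ⟨l + 1, h⟩ then z else 0 := by
  unfold crossingSign
  split_ifs <;> simp_all

end Crossing

section Families

variable {k : Type} [Field k] {I : Type} [Fintype I] [DecidableEq I]

/-- Elements of an algebra satisfying the defining relations of `R(N)`: the data of an algebra
homomorphism out of `R(N)`, see `KLRFamily.lift`. -/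
structure KLRFamily (C : CartanDatum k I) (N : ℕ) (A : Type) [Ring A] [Algebra k A] where
  e : (Fin N → I) → A
  x : Fin N → A
  t : ∀ l : ℕ, l + 1 < N → A
  e_mul_e : ∀ ν ν', e ν * e ν' = if ν = ν' then e ν else 0
  sum_e : ∑ ν, e ν = 1
  commute_x : ∀ a b, Commute (x a) (x b)
  commute_x_e : ∀ a ν, Commute (x a) (e ν)
  t_mul_e : ∀ l h ν, t l h * e ν = e (ν ∘ simpleSwap l h) * t l h
  commute_t : ∀ l h l' h', l + 1 < l' → Commute (t l h) (t l' h')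
  t_sq_mul_e : ∀ l h ν, t l h ^ 2 * e ν =
    Qel C (ν ⟨l, Nat.lt_of_succ_lt h⟩) (ν ⟨l + 1, h⟩)
      (x ⟨l, Nat.lt_of_succ_lt h⟩) (x ⟨l + 1, h⟩) * e ν
  t_mul_x_mul_e : ∀ l h a ν,
    (t l h * x a - x (simpleSwap l h a) * t l h) * e ν = crossingSign l h a ν • e ν
  braid_mul_e : ∀ l (h : l + 2 < N) ν,
    (t (l + 1) h * t l (Nat.lt_of_succ_lt h) * t (l + 1) h
      - t l (Nat.lt_of_succ_lt h) * t (l + 1) h * t l (Nat.lt_of_succ_lt h)) * e ν =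
    (if ν ⟨l, by omega⟩ = ν ⟨l + 2, h⟩ then
      Qdiff C (ν ⟨l, by omega⟩) (ν ⟨l + 1, by omega⟩)
        (x ⟨l, by omega⟩) (x ⟨l + 1, by omega⟩) (x ⟨l + 2, h⟩) else 0) * e ν

end Families

section Polynomials

variable {k : Type} [Field k] {I : Type} [Fintype I] [DecidableEq I]
  (C : CartanDatum k I) {A B : Type} [Ring A] [Algebra k A] [Ring B] [Algebra k B]

theorem map_Qel (φ : A →ₐ[k] B) (i j : I) (u v : A) :
    φ (Qel C i j u v) = Qel C i j (φ u) (φ v) := by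
  unfold Qel
  split_ifs
  · exact map_zero φ
  · simp only [map_sum, apply_ite φ, map_smul, map_mul, map_pow, map_zero]

theorem map_Qdiff (φ : A →ₐ[k] B) (i j : I) (u v w : A) :
    φ (Qdiff C i j u v w) = Qdiff C i j (φ u) (φ v) (φ w) := by
  unfold Qdiff
  split_ifs
  · exact map_zero φ
  · simp only [map_sum, apply_ite φ, map_smul, map_mul, map_pow, map_zero]

end Polynomials

namespace KLRFamily

variable {k : Type} [Field k] {I : Type} [Fintype I] [DecidableEq I]
  {C : CartanDatum k I} {N : ℕ} {A : Type} [Ring A] [Algebra k A] (D : KLRFamily C N A)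

/-- The homomorphism from the free algebra attached to a family. -/
noncomputable def freeLift : FA k I N →ₐ[k] A :=
  FreeAlgebra.lift k fun
    | Gen.e ν => D.e ν
    | Gen.x a => D.x a
    | Gen.tau l h => D.t l h

@[simp] theorem freeLift_e (ν : Fin N → I) : D.freeLift (ge k ν) = D.e ν := by
  simp [freeLift, ge]

@[simp] theorem freeLift_x (a : Fin N) : D.freeLift (gx k a) = D.x a := by
  simp [freeLift, gx]

@[simp] theorem freeLift_t (l : ℕ) (h : l + 1 < N) : D.freeLift (gt k l h) = D.t l h := by
  simp [freeLift, gt]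

theorem freeLift_eq_of_rel {p q : FA k I N} (h : Rel C N p q) : D.freeLift p = D.freeLift q := by
  induction h with
  | ee ν ν' => simp [D.e_mul_e, apply_ite D.freeLift]
  | esum => simp [D.sum_e]
  | xx a b => simp [(D.commute_x a b).eq]
  | xe a ν => simp [(D.commute_x_e a ν).eq]
  | taue l h ν => simp [D.t_mul_e]
  | tautau l h l' h' hl =>
    rcases hl with hl | hl
    · simp [(D.commute_t l h l' h' hl).eq]
    · simp [(D.commute_t l' h' l h hl).eq]
  | tausq l h ν => simp [map_Qel, D.t_sq_mul_e]
  | taux l h a ν =>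
    simpa [apply_ite D.freeLift, crossingSign_smul, -zsmul_eq_mul] using D.t_mul_x_mul_e l h a ν
  | braid l h ν =>
    simpa [apply_ite D.freeLift, map_Qdiff, ite_mul] using D.braid_mul_e l h ν

/-- The homomorphism `R(N) → A` attached to a family of elements of `A`. -/
noncomputable def lift : Alg C N →ₐ[k] A :=
  RingQuot.liftAlgHom k ⟨D.freeLift, fun _ _ h => D.freeLift_eq_of_rel h⟩

@[simp] theorem lift_e (ν : Fin N → I) : D.lift (Ee C ν) = D.e ν := by
  simp [lift, Ee]

@[simp] theorem lift_x (a : Fin N) : D.lift (Xx C a) = D.x a := by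
  simp [lift, Xx]

@[simp] theorem lift_t (l : ℕ) (h : l + 1 < N) : D.lift (Tt C l h) = D.t l h := by
  simp [lift, Tt]

end KLRFamily

section Generators

variable {k : Type} [Field k] {I : Type} [Fintype I] [DecidableEq I]
  (C : CartanDatum k I) {N : ℕ}

/-- The generators of `R(N)`, as a family of elements of `R(N)`. -/
@[simps]
noncomputable def generators (N : ℕ) : KLRFamily C N (Alg C N) where
  e := Ee C
  x := Xx C
  t := Tt C
  e_mul_e ν ν' := by
    simpa [Ee, Xx, Tt, apply_ite (RingQuot.mkAlgHom k (Rel C N))] using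
      RingQuot.mkAlgHom_rel k (Rel.ee (C := C) ν ν')
  sum_e := by simpa [Ee] using RingQuot.mkAlgHom_rel k (Rel.esum (C := C) (n := N))
  commute_x a b := by simpa [Xx, commute_iff_eq] using RingQuot.mkAlgHom_rel k (Rel.xx (C := C) a b)
  commute_x_e a ν := by
    simpa [Ee, Xx, commute_iff_eq] using RingQuot.mkAlgHom_rel k (Rel.xe (C := C) a ν)
  t_mul_e l h ν := by simpa [Ee, Tt] using RingQuot.mkAlgHom_rel k (Rel.taue (C := C) l h ν)
  commute_t l h l' h' hl := by
    simpa [Tt, commute_iff_eq] using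
      RingQuot.mkAlgHom_rel k (Rel.tautau (C := C) l h l' h' (.inl hl))
  t_sq_mul_e l h ν := by
    simpa [Ee, Xx, Tt, map_Qel] using RingQuot.mkAlgHom_rel k (Rel.tausq (C := C) l h ν)
  t_mul_x_mul_e l h a ν := by
    simpa [Ee, Xx, Tt, apply_ite (RingQuot.mkAlgHom k (Rel C N)), crossingSign_smul,
      -zsmul_eq_mul] using
      RingQuot.mkAlgHom_rel k (Rel.taux (C := C) l h a ν)
  braid_mul_e l h ν := by
    simpa [Ee, Xx, Tt, apply_ite (RingQuot.mkAlgHom k (Rel C N)), map_Qdiff, ite_mul] using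
      RingQuot.mkAlgHom_rel k (Rel.braid (C := C) l h ν)

variable {C}

theorem eq_top_of_generators_mem {S : Subalgebra k (Alg C N)} (he : ∀ ν, Ee C ν ∈ S)
    (hx : ∀ a, Xx C a ∈ S) (ht : ∀ l h, Tt C l h ∈ S) : S = ⊤ := by
  have : (⊤ : Subalgebra k (FA k I N)) ≤ S.comap (RingQuot.mkAlgHom k (Rel C N)) := by
    rw [← FreeAlgebra.adjoin_range_ι, Algebra.adjoin_le_iff]
    rintro _ ⟨g | g | g, rfl⟩
    exacts [he _, hx _, ht _ _]
  refine (Algebra.eq_top_iff).2 fun r => ?_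
  obtain ⟨f, rfl⟩ := RingQuot.mkAlgHom_surjective k (Rel C N) r
  exact this Algebra.mem_top

theorem algHom_ext {A : Type} [Semiring A] [Algebra k A] {φ ψ : Alg C N →ₐ[k] A}
    (he : ∀ ν, φ (Ee C ν) = ψ (Ee C ν)) (hx : ∀ a, φ (Xx C a) = ψ (Xx C a))
    (ht : ∀ l h, φ (Tt C l h) = ψ (Tt C l h)) : φ = ψ := by
  have : AlgHom.equalizer φ ψ = ⊤ := eq_top_of_generators_mem he hx ht
  exact AlgHom.ext fun r => (this ▸ Algebra.mem_top : r ∈ AlgHom.equalizer φ ψ)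

theorem commute_of_generators {A : Type} [Ring A] [Algebra k A] (φ : Alg C N →ₐ[k] A) (z : A)
    (he : ∀ ν, Commute (φ (Ee C ν)) z) (hx : ∀ a, Commute (φ (Xx C a)) z)
    (ht : ∀ l h, Commute (φ (Tt C l h)) z) (r : Alg C N) : Commute (φ r) z := by
  have mem_iff (s : Alg C N) : s ∈ (Subalgebra.centralizer k {z}).comap φ ↔ Commute (φ s) z := by
    simp [Subalgebra.mem_centralizer_iff, commute_iff_eq, eq_comm]
  have : (Subalgebra.centralizer k {z}).comap φ = ⊤ :=
    eq_top_of_generators_mem (fun ν => (mem_iff _).2 (he ν)) (fun a => (mem_iff _).2 (hx a))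
      (fun l h => (mem_iff _).2 (ht l h))
  exact (mem_iff r).1 (this ▸ Algebra.mem_top)

end Generators

section Interval

/-- The inclusion of `Fin m` in `Fin N` as the interval starting at `o`. -/
def interval {m N : ℕ} (o : ℕ) (ho : o + m ≤ N) : Fin m ↪o Fin N :=
  (Fin.natAddOrderEmb o).trans (Fin.castLEOrderEmb ho)

variable {I : Type} [DecidableEq I] {m n N o : ℕ}

theorem simpleSwap_apply_of_ne {l : ℕ} (h : l + 1 < N) {a : Fin N} (ha : (a : ℕ) ≠ l)
    (ha' : (a : ℕ) ≠ l + 1) : simpleSwap l h a = a :=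
  Equiv.swap_apply_of_ne_of_ne (by simpa [Fin.ext_iff]) (by simpa [Fin.ext_iff])

theorem interval_mk (ho : o + m ≤ N) (l : ℕ) (h : l < m) :
    interval o ho ⟨l, h⟩ = ⟨o + l, by omega⟩ := rfl

theorem interval_zero (h : 0 + m ≤ m + n) : ⇑(interval 0 h) = Fin.castAdd n := by
  ext a
  exact zero_add (a : ℕ)

theorem interval_natAdd (h : m + n ≤ m + n) : ⇑(interval m h) = Fin.natAdd m := rfl

theorem simpleSwap_interval (ho : o + m ≤ N) (l : ℕ) (h : l + 1 < m) (a : Fin m) :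
    simpleSwap (o + l) (by omega) (interval o ho a) = interval o ho (simpleSwap l h a) :=
  ((interval o ho).injective.map_swap ⟨l, _⟩ ⟨l + 1, h⟩ a).symm

theorem crossingSign_interval (ho : o + m ≤ N) (l : ℕ) (h : l + 1 < m) (a : Fin m)
    (μ : Fin N → I) :
    crossingSign (o + l) (by omega) (interval o ho a) μ =
      crossingSign l h a (μ ∘ interval o ho) := by
  simp only [crossingSign, Function.comp_apply, interval_mk, ← (interval o ho).injective.eq_iff,
    add_assoc]

end Interval

/-! ### The homomorphism `R(m) ⊗ R(n) → R(m+n)` -/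

namespace KLRFamily

variable {k : Type} [Field k] {I : Type} [Fintype I] [DecidableEq I]
  {C : CartanDatum k I} {N m : ℕ} {A : Type} [Ring A] [Algebra k A] (D : KLRFamily C N A)

theorem eq_of_mul_e {z w : A} (h : ∀ ν, z * D.e ν = w * D.e ν) : z = w := by
  rw [← mul_one z, ← mul_one w, ← D.sum_e, Finset.mul_sum, Finset.mul_sum]
  exact Finset.sum_congr rfl fun ν _ => h ν

theorem commute_t_x {l : ℕ} (h : l + 1 < N) {a : Fin N} (ha : (a : ℕ) ≠ l)
    (ha' : (a : ℕ) ≠ l + 1) : Commute (D.t l h) (D.x a) := by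
  refine sub_eq_zero.1 (D.eq_of_mul_e fun ν => ?_)
  have hx := D.t_mul_x_mul_e l h a ν
  rw [simpleSwap_apply_of_ne h ha ha'] at hx
  simp [hx, crossingSign, Fin.ext_iff, ha, ha']

/-- The sum of the idempotents `e(μ)` over the `μ` that restrict to `ν` along `j`. -/
def restrictE (j : Fin m → Fin N) (ν : Fin m → I) : A :=
  ∑ μ with μ ∘ j = ν, D.e μ

theorem e_mul_restrictE (j : Fin m → Fin N) (μ : Fin N → I) (ν : Fin m → I) :
    D.e μ * D.restrictE j ν = if μ ∘ j = ν then D.e μ else 0 := by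
  simp only [restrictE, Finset.mul_sum, D.e_mul_e, Finset.sum_ite_eq, Finset.mem_filter_univ]

theorem restrictE_mul (j : Fin m → Fin N) (ν : Fin m → I) (z : A) :
    D.restrictE j ν * z = ∑ μ with μ ∘ j = ν, D.e μ * z :=
  Finset.sum_mul ..

theorem mul_restrictE_congr {j : Fin m → Fin N} {ν : Fin m → I} {z w : A}
    (h : ∀ μ, μ ∘ j = ν → z * D.e μ = w * D.e μ) :
    z * D.restrictE j ν = w * D.restrictE j ν := by
  simp only [restrictE, Finset.mul_sum]
  exact Finset.sum_congr rfl fun μ hμ => h μ (Finset.mem_filter_univ μ |>.1 hμ)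

theorem restrictE_mul_restrictE (j : Fin m → Fin N) (ν ν' : Fin m → I) :
    D.restrictE j ν * D.restrictE j ν' = if ν = ν' then D.restrictE j ν else 0 := by
  rw [restrictE_mul]
  simp only [e_mul_restrictE]
  split_ifs with hν
  · subst hν
    exact Finset.sum_congr rfl fun μ hμ => if_pos ((Finset.mem_filter_univ μ).1 hμ)
  · refine Finset.sum_eq_zero fun μ hμ => if_neg fun h => hν ?_
    rw [← (Finset.mem_filter_univ μ).1 hμ, h]

theorem sum_restrictE (j : Fin m → Fin N) : ∑ ν, D.restrictE j ν = 1 := by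
  rw [← D.sum_e]
  exact Finset.sum_fiberwise _ _ _

theorem commute_x_restrictE (j : Fin m → Fin N) (a : Fin N) (ν : Fin m → I) :
    Commute (D.x a) (D.restrictE j ν) :=
  Commute.sum_right _ _ _ fun μ _ => D.commute_x_e a μ

theorem t_mul_restrictE (j : Fin m → Fin N) (l : ℕ) (h : l + 1 < N) (ν : Fin m → I) :
    D.t l h * D.restrictE j ν = D.restrictE (simpleSwap l h ∘ j) ν * D.t l h := by
  simp only [restrictE, Finset.mul_sum, Finset.sum_mul, D.t_mul_e]
  refine Finset.sum_bij' (fun μ _ => μ ∘ simpleSwap l h) (fun μ _ => μ ∘ simpleSwap l h)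
    ?_ ?_ ?_ ?_ ?_ <;>
  simp [Function.comp_assoc, funext_iff]

theorem restrictE_comp_perm (j : Fin m → Fin N) (s : Equiv.Perm (Fin m)) (ν : Fin m → I) :
    D.restrictE (j ∘ s) ν = D.restrictE j (ν ∘ ⇑s.symm) := by
  simp only [restrictE, ← Function.comp_assoc, ← Equiv.eq_comp_symm]

theorem commute_restrictE {n : ℕ} (j : Fin m → Fin N) (j' : Fin n → Fin N) (ν : Fin m → I)
    (ν' : Fin n → I) : Commute (D.restrictE j ν) (D.restrictE j' ν') := by
  refine Commute.sum_left _ _ _ fun μ _ => Commute.sum_right _ _ _ fun μ' _ => ?_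
  simp only [commute_iff_eq, D.e_mul_e, eq_comm (a := μ')]
  split_ifs with h
  exacts [congrArg D.e h, rfl]

theorem commute_t_restrictE {j : Fin m → Fin N} {l : ℕ} {h : l + 1 < N}
    (hj : ∀ a, simpleSwap l h (j a) = j a) (ν : Fin m → I) :
    Commute (D.t l h) (D.restrictE j ν) := by
  rw [commute_iff_eq, t_mul_restrictE, show simpleSwap l h ∘ j = j from funext hj]

/-- The family for `R(m)` carried by the strands `o, …, o + m - 1` of a family for `R(N)`. -/
@[simps]
noncomputable def restrict (o : ℕ) (ho : o + m ≤ N) : KLRFamily C m A where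
  e := D.restrictE (interval o ho)
  x a := D.x (interval o ho a)
  t l h := D.t (o + l) (by omega)
  e_mul_e := D.restrictE_mul_restrictE _
  sum_e := D.sum_restrictE _
  commute_x a b := D.commute_x _ _
  commute_x_e a ν := D.commute_x_restrictE _ _ _
  t_mul_e l h ν := by
    rw [t_mul_restrictE, show simpleSwap (o + l) _ ∘ interval o ho = interval o ho ∘ simpleSwap l h
      from funext (simpleSwap_interval ho l h), restrictE_comp_perm, Equiv.symm_swap]
  commute_t l h l' h' hl := D.commute_t _ _ _ _ (by omega)
  t_sq_mul_e l h ν := D.mul_restrictE_congr fun μ hμ => by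
    subst hμ
    exact D.t_sq_mul_e (o + l) _ μ
  t_mul_x_mul_e l h a ν := by
    rw [← smul_one_mul]
    refine D.mul_restrictE_congr fun μ hμ => ?_
    rw [smul_one_mul, ← simpleSwap_interval, D.t_mul_x_mul_e, ← hμ, crossingSign_interval]
  braid_mul_e l h ν := D.mul_restrictE_congr fun μ hμ => by
    subst hμ
    exact D.braid_mul_e (o + l) (by omega) μ

end KLRFamily

section TensorHom

variable {k : Type} [Field k] {I : Type} [Fintype I] [DecidableEq I]
  (C : CartanDatum k I) (m n : ℕ)

/-- The homomorphism `R(m) → R(m+n)` onto the first `m` strands. -/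
noncomputable def inlHom : Alg C m →ₐ[k] Alg C (m + n) :=
  ((generators C (m + n)).restrict 0 (by omega)).lift

/-- The homomorphism `R(n) → R(m+n)` onto the last `n` strands. -/
noncomputable def inrHom : Alg C n →ₐ[k] Alg C (m + n) :=
  ((generators C (m + n)).restrict m le_rfl).lift

variable {m n}

theorem inlHom_e (ν : Fin m → I) :
    inlHom C m n (Ee C ν) = (generators C (m + n)).restrictE (Fin.castAdd n) ν := by
  simp [inlHom, interval_zero]

theorem inrHom_e (ν : Fin n → I) :
    inrHom C m n (Ee C ν) = (generators C (m + n)).restrictE (Fin.natAdd m) ν := by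
  simp [inrHom, interval_natAdd]

@[simp] theorem inlHom_x (a : Fin m) : inlHom C m n (Xx C a) = Xx C (Fin.castAdd n a) := by
  simp [inlHom, interval_zero]

@[simp] theorem inrHom_x (a : Fin n) : inrHom C m n (Xx C a) = Xx C (Fin.natAdd m a) := by
  simp [inrHom, interval_natAdd]

@[simp] theorem inlHom_t (l : ℕ) (h : l + 1 < m) :
    inlHom C m n (Tt C l h) = Tt C l (Nat.lt_add_right n h) := by
  simp [inlHom]

@[simp] theorem inrHom_t (l : ℕ) (h : l + 1 < n) :
    inrHom C m n (Tt C l h) = Tt C (m + l) (Nat.add_lt_add_left h m) := by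
  simp [inrHom]

theorem inlHom_e_mul_inrHom_e (ν : Fin m → I) (ν' : Fin n → I) :
    inlHom C m n (Ee C ν) * inrHom C m n (Ee C ν') = Ee C (Fin.append ν ν') := by
  rw [inlHom_e, inrHom_e, KLRFamily.restrictE_mul]
  rw [Finset.sum_filter, Finset.sum_eq_single (Fin.append ν ν')]
  · simp [KLRFamily.e_mul_restrictE, -generators_e, funext_iff]
    rfl
  · intro μ _ hμ
    rw [KLRFamily.e_mul_restrictE, ← ite_and, if_neg]
    rintro ⟨rfl, rfl⟩
    exact hμ (funext fun a => by induction a using Fin.addCases <;> simp)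
  · simp

theorem commute_inlHom_inrHom (r : Alg C m) (s : Alg C n) :
    Commute (inlHom C m n r) (inrHom C m n s) := by
  let D := generators C (m + n)
  refine commute_of_generators _ _ (fun ν => ?_) (fun a => ?_) (fun l h => ?_) r <;>
    refine (commute_of_generators _ _ (fun ν' => ?_) (fun a' => ?_) (fun l' h' => ?_) s).symm
  · rw [inlHom_e, inrHom_e]
    exact D.commute_restrictE ..
  · rw [inlHom_e, inrHom_x]
    exact D.commute_x_restrictE ..
  · rw [inlHom_e, inrHom_t]
    exact D.commute_t_restrictE
      (fun a => simpleSwap_apply_of_ne _ (by simp; omega) (by simp; omega)) _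
  · rw [inlHom_x, inrHom_e]
    exact (D.commute_x_restrictE ..).symm
  · rw [inlHom_x, inrHom_x]
    exact D.commute_x ..
  · rw [inlHom_x, inrHom_t]
    exact D.commute_t_x _ (by simp; omega) (by simp; omega)
  · rw [inlHom_t, inrHom_e]
    exact (D.commute_t_restrictE
      (fun a => simpleSwap_apply_of_ne _ (by simp; omega) (by simp; omega)) _).symm
  · rw [inlHom_t, inrHom_x]
    exact (D.commute_t_x _ (by simp; omega) (by simp; omega)).symm
  · rw [inlHom_t, inrHom_t]
    exact (D.commute_t _ _ _ _ (by omega)).symm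

variable (m n) in
/-- The homomorphism `ι : R(m) ⊗ R(n) → R(m+n)` placing the strands of the factors side by
side. -/
noncomputable def tensorHom : Alg C m ⊗[k] Alg C n →ₐ[k] Alg C (m + n) :=
  Algebra.TensorProduct.lift (inlHom C m n) (inrHom C m n) (commute_inlHom_inrHom C)

@[simp] theorem tensorHom_tmul (r : Alg C m) (s : Alg C n) :
    tensorHom C m n (r ⊗ₜ s) = inlHom C m n r * inrHom C m n s :=
  Algebra.TensorProduct.lift_tmul ..

end TensorHom

/-! ### The anti-involution -/

section Polynomials

open MulOpposite

variable {k : Type} [Field k] {I : Type} [Fintype I] [DecidableEq I]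
  (C : CartanDatum k I) {A : Type} [Ring A] [Algebra k A]

theorem commute_Qel {z u v : A} (hu : Commute z u) (hv : Commute z v) (i j : I) :
    Commute z (Qel C i j u v) := by
  unfold Qel
  split_ifs
  · exact Commute.zero_right z
  · refine Commute.sum_right _ _ _ fun p _ => Commute.sum_right _ _ _ fun q _ => ?_
    split_ifs
    · exact ((hu.pow_right p).mul_right (hv.pow_right q)).smul_right _
    · exact Commute.zero_right z

theorem commute_Qdiff {z u v w : A} (hu : Commute z u) (hv : Commute z v) (hw : Commute z w)
    (i j : I) : Commute z (Qdiff C i j u v w) := by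
  unfold Qdiff
  split_ifs
  · exact Commute.zero_right z
  · refine Commute.sum_right _ _ _ fun p _ => Commute.sum_right _ _ _ fun q _ => ?_
    split_ifs
    · refine (Commute.mul_right (Commute.sum_right _ _ _ fun c _ => ?_)
        (hv.pow_right q)).smul_right _
      exact (hu.pow_right c).mul_right (hw.pow_right _)
    · exact Commute.zero_right z

theorem Qel_op {u v : A} (h : Commute u v) (i j : I) :
    Qel C i j (op u) (op v) = op (Qel C i j u v) := by
  unfold Qel
  split_ifs
  · rfl
  · have hpow (p q : ℕ) : op u ^ p * op v ^ q = op v ^ q * op u ^ p := (h.op.pow_pow p q).eq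
    simp only [Finset.op_sum, apply_ite op, op_zero, op_smul, op_mul, op_pow, hpow]

theorem Qdiff_op {u v w : A} (huv : Commute u v) (huw : Commute u w) (hwv : Commute w v)
    (i j : I) : Qdiff C i j (op u) (op v) (op w) = op (Qdiff C i j u v w) := by
  unfold Qdiff
  split_ifs
  · rfl
  · have hpow (c d : ℕ) : op u ^ c * op w ^ d = op w ^ d * op u ^ c := (huw.op.pow_pow c d).eq
    have hsum (p q : ℕ) : Commute (∑ c ∈ Finset.range p, op w ^ (p - 1 - c) * op u ^ c)
        (op v ^ q) :=
      Commute.sum_left _ _ _ fun c _ => (hwv.op.pow_pow _ _).mul_left (huv.op.pow_pow _ _)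
    simp only [Finset.op_sum, apply_ite op, op_zero, op_smul, op_mul, op_pow, hpow, (hsum _ _).eq]

end Polynomials

section Words

variable {I : Type} [DecidableEq I] {N : ℕ}

theorem simpleSwap_braid {l : ℕ} (h : l + 2 < N) :
    simpleSwap l (by omega) * simpleSwap (l + 1) h * simpleSwap l (by omega) =
      Equiv.swap ⟨l, by omega⟩ ⟨l + 2, h⟩ := by
  have hbraid := Equiv.swap_mul_swap_mul_swap (x := (⟨l + 2, h⟩ : Fin N))
    (y := ⟨l + 1, by omega⟩) (z := ⟨l, by omega⟩) (by simp) (by simp)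
  rwa [Equiv.swap_comm (⟨l + 1, by omega⟩ : Fin N) ⟨l, by omega⟩,
    Equiv.swap_comm (⟨l + 2, h⟩ : Fin N) ⟨l + 1, by omega⟩] at hbraid

theorem simpleSwap_braid' {l : ℕ} (h : l + 2 < N) :
    simpleSwap (l + 1) h * simpleSwap l (by omega) * simpleSwap (l + 1) h =
      Equiv.swap ⟨l, by omega⟩ ⟨l + 2, h⟩ :=
  (Equiv.swap_mul_swap_mul_swap (by simp) (by simp [add_assoc])).trans (Equiv.swap_comm _ _)

theorem comp_swap_of_eq {X Y : Type} [DecidableEq X] {ν : X → Y} {a b : X} (h : ν a = ν b) :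
    ν ∘ Equiv.swap a b = ν := by
  rw [Equiv.comp_swap_eq_update, h, Function.update_eq_self, ← h, Function.update_eq_self]

theorem crossingSign_eq_zero {l : ℕ} {h : l + 1 < N} {ν : Fin N → I}
    (hν : ν ⟨l, Nat.lt_of_succ_lt h⟩ ≠ ν ⟨l + 1, h⟩) (a : Fin N) : crossingSign l h a ν = 0 :=
  if_neg hν

theorem crossingSign_simpleSwap (l : ℕ) (h : l + 1 < N) (a : Fin N) (ν : Fin N → I) :
    crossingSign l h (simpleSwap l h a) (ν ∘ simpleSwap l h) = -crossingSign l h a ν := by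
  simp only [crossingSign, Function.comp_apply, Equiv.swap_apply_left, Equiv.swap_apply_right,
    eq_comm (a := ν ⟨l + 1, h⟩), Equiv.swap_apply_def]
  split_ifs <;> simp_all [Fin.ext_iff]

end Words

namespace KLRFamily

open MulOpposite

variable {k : Type} [Field k] {I : Type} [Fintype I] [DecidableEq I]
  {C : CartanDatum k I} {N : ℕ} {A : Type} [Ring A] [Algebra k A] (D : KLRFamily C N A)

theorem e_mul_t (l : ℕ) (h : l + 1 < N) (ν : Fin N → I) :
    D.e ν * D.t l h = D.t l h * D.e (ν ∘ simpleSwap l h) := by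
  rw [D.t_mul_e, Function.comp_assoc, ← Equiv.coe_trans, Equiv.swap_swap, Equiv.coe_refl,
    Function.comp_id]

theorem e_mul_t_sq (l : ℕ) (h : l + 1 < N) (ν : Fin N → I) :
    D.e ν * D.t l h ^ 2 = D.t l h ^ 2 * D.e ν := by
  rw [sq, ← mul_assoc, D.e_mul_t, mul_assoc, ← D.t_mul_e, mul_assoc]

theorem commute_e_Qel (i j : I) (a b : Fin N) (ν : Fin N → I) :
    Commute (D.e ν) (Qel C i j (D.x a) (D.x b)) :=
  commute_Qel C (D.commute_x_e a ν).symm (D.commute_x_e b ν).symm i j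

theorem commute_e_Qdiff (i j : I) (a b c : Fin N) (ν : Fin N → I) :
    Commute (D.e ν) (Qdiff C i j (D.x a) (D.x b) (D.x c)) :=
  commute_Qdiff C (D.commute_x_e a ν).symm (D.commute_x_e b ν).symm (D.commute_x_e c ν).symm i j

theorem e_mul_t_mul_x (l : ℕ) (h : l + 1 < N) (a : Fin N) (ν : Fin N → I) :
    D.e ν * (D.x a * D.t l h - D.t l h * D.x (simpleSwap l h a)) =
      crossingSign l h a ν • D.e ν := by
  have hx := D.t_mul_x_mul_e l h (simpleSwap l h a) (ν ∘ simpleSwap l h)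
  rw [crossingSign_simpleSwap, Equiv.swap_apply_self, sub_mul, mul_assoc,
    (D.commute_x_e _ _).eq, ← mul_assoc, ← e_mul_t, mul_assoc (D.x a), ← e_mul_t] at hx
  rw [mul_sub, ← mul_assoc, ← mul_assoc, ← (D.commute_x_e a ν).eq, mul_assoc, ← neg_sub, hx]
  by_cases hν : ν ⟨l, Nat.lt_of_succ_lt h⟩ = ν ⟨l + 1, h⟩
  · rw [comp_swap_of_eq hν, neg_smul, neg_neg]
  · simp [crossingSign_eq_zero hν]

theorem e_mul_braid (l : ℕ) (h : l + 2 < N) (ν : Fin N → I) :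
    D.e ν * (D.t (l + 1) h * D.t l (by omega) * D.t (l + 1) h
      - D.t l (by omega) * D.t (l + 1) h * D.t l (by omega)) =
    D.e ν * (if ν ⟨l, by omega⟩ = ν ⟨l + 2, h⟩ then
      Qdiff C (ν ⟨l, by omega⟩) (ν ⟨l + 1, by omega⟩)
        (D.x ⟨l, by omega⟩) (D.x ⟨l + 1, by omega⟩) (D.x ⟨l + 2, h⟩) else 0) := by
  have hmove : D.e ν * (D.t (l + 1) h * D.t l (by omega) * D.t (l + 1) h
      - D.t l (by omega) * D.t (l + 1) h * D.t l (by omega)) =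
      (D.t (l + 1) h * D.t l (by omega) * D.t (l + 1) h
      - D.t l (by omega) * D.t (l + 1) h * D.t l (by omega)) *
        D.e (ν ∘ Equiv.swap ⟨l, by omega⟩ ⟨l + 2, h⟩) := by
    rw [mul_sub, sub_mul]
    conv_rhs =>
      congr
      · rw [← simpleSwap_braid' h]
      · rw [← simpleSwap_braid h]
    simp only [← mul_assoc, e_mul_t]
    simp only [mul_assoc, e_mul_t, Equiv.Perm.coe_mul, Function.comp_assoc]
  rw [hmove, braid_mul_e]
  by_cases hν : ν ⟨l, by omega⟩ = ν ⟨l + 2, h⟩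
  · rw [comp_swap_of_eq hν, if_pos hν, (D.commute_e_Qdiff ..).eq]
  · have hν' : ν ⟨l + 2, h⟩ ≠ ν ⟨l, by omega⟩ := Ne.symm hν
    simp [hν, hν']

/-- A family satisfying the relations also satisfies them in the opposite algebra. -/
@[simps]
def op : KLRFamily C N Aᵐᵒᵖ where
  e ν := MulOpposite.op (D.e ν)
  x a := MulOpposite.op (D.x a)
  t l h := MulOpposite.op (D.t l h)
  e_mul_e ν ν' := by
    rw [← op_mul, D.e_mul_e]
    split_ifs with h₁ h₂ h₂
    exacts [h₁ ▸ rfl, (h₂ h₁.symm).elim, (h₁ h₂.symm).elim, rfl]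
  sum_e := by rw [← Finset.op_sum, D.sum_e, op_one]
  commute_x a b := (D.commute_x a b).op
  commute_x_e a ν := (D.commute_x_e a ν).op
  t_mul_e l h ν := by rw [← op_mul, D.e_mul_t, op_mul]
  commute_t l h l' h' hl := (D.commute_t l h l' h' hl).op
  t_sq_mul_e l h ν := by
    rw [Qel_op C (D.commute_x _ _), ← op_pow, ← op_mul, ← op_mul, D.e_mul_t_sq, D.t_sq_mul_e,
      (D.commute_e_Qel ..).eq]
  t_mul_x_mul_e l h a ν := by
    simp only [← op_mul, ← op_sub, D.e_mul_t_mul_x, op_smul]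
  braid_mul_e l h ν := by
    rw [Qdiff_op C (D.commute_x _ _) (D.commute_x _ _) (D.commute_x _ _)]
    simp only [← op_mul, ← op_sub, ← mul_assoc, ← op_zero, ← apply_ite MulOpposite.op]
    simpa only [mul_assoc] using congrArg MulOpposite.op (D.e_mul_braid l h ν)

end KLRFamily

section Transpose

open MulOpposite

variable {k : Type} [Field k] {I : Type} [Fintype I] [DecidableEq I]
  (C : CartanDatum k I)

/-- The anti-involution of `R(N)` that fixes all generators. -/
noncomputable def transpose (N : ℕ) : Alg C N ≃ₐ[k] (Alg C N)ᵐᵒᵖ :=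
  have hinv : (AlgHom.opComm (generators C N).op.lift).comp (generators C N).op.lift =
      AlgHom.id k (Alg C N) := by
    refine algHom_ext (fun ν => ?_) (fun a => ?_) fun l h => ?_ <;> simp
  AlgEquiv.ofAlgHom (generators C N).op.lift (AlgHom.opComm (generators C N).op.lift)
    (AlgHom.ext fun z => congrArg op (DFunLike.congr_fun hinv (unop z))) hinv

variable {N : ℕ}

@[simp] theorem transpose_e (ν : Fin N → I) : transpose C N (Ee C ν) = op (Ee C ν) := by
  simp [transpose]

@[simp] theorem transpose_x (a : Fin N) : transpose C N (Xx C a) = op (Xx C a) := by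
  simp [transpose]

@[simp] theorem transpose_t (l : ℕ) (h : l + 1 < N) :
    transpose C N (Tt C l h) = op (Tt C l h) := by
  simp [transpose]

theorem transpose_restrictE {m : ℕ} (j : Fin m → Fin N) (ν : Fin m → I) :
    transpose C N ((generators C N).restrictE j ν) = op ((generators C N).restrictE j ν) := by
  simp [KLRFamily.restrictE, Finset.op_sum]

variable (m n : ℕ)

theorem transpose_inlHom (r : Alg C m) :
    transpose C (m + n) (inlHom C m n r) = op (inlHom C m n (unop (transpose C m r))) :=
  DFunLike.congr_fun (f := (transpose C (m + n)).toAlgHom.comp (inlHom C m n))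
    (g := (AlgHom.op (inlHom C m n)).comp (transpose C m).toAlgHom)
    (algHom_ext (fun ν => by simp [inlHom_e, transpose_restrictE]) (fun a => by simp)
      fun l h => by simp) r

theorem transpose_inrHom (r : Alg C n) :
    transpose C (m + n) (inrHom C m n r) = op (inrHom C m n (unop (transpose C n r))) :=
  DFunLike.congr_fun (f := (transpose C (m + n)).toAlgHom.comp (inrHom C m n))
    (g := (AlgHom.op (inrHom C m n)).comp (transpose C n).toAlgHom)
    (algHom_ext (fun ν => by simp [inrHom_e, transpose_restrictE]) (fun a => by simp)
      fun l h => by simp) r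

/-- The anti-involution of `R(m) ⊗ R(n)` that fixes the generators of both factors. -/
noncomputable def tensorTranspose : Alg C m ⊗[k] Alg C n ≃ₐ[k] (Alg C m ⊗[k] Alg C n)ᵐᵒᵖ :=
  (Algebra.TensorProduct.congr (transpose C m) (transpose C n)).trans
    (Algebra.TensorProduct.opAlgEquiv k k (Alg C m) (Alg C n))

theorem transpose_tensorHom (z : Alg C m ⊗[k] Alg C n) :
    transpose C (m + n) (tensorHom C m n z) =
      op (tensorHom C m n (unop (tensorTranspose C m n z))) := by
  induction z with
  | zero => simp
  | add y z hy hz => simp only [map_add, hy, hz, unop_add, op_add]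
  | tmul r s =>
    rw [tensorHom_tmul, (commute_inlHom_inrHom C r s).eq, map_mul, transpose_inlHom,
      transpose_inrHom]
    simp [tensorTranspose]

theorem free_op_of_free {R S : Type*} [Semiring R] [Semiring S] (ι : S →+* R) (σ : S ≃+* Sᵐᵒᵖ)
    (θ : R ≃+* Rᵐᵒᵖ) (hι : ∀ s, θ (ι s) = op (ι (unop (σ s))))
    (hfree : letI := Module.compHom R ι; Module.Free S R) :
    letI : Module Sᵐᵒᵖ R := Module.compHom R (RingHom.op ι)
    Module.Free Sᵐᵒᵖ R := by
  let := Module.compHom R ι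
  let : Module Sᵐᵒᵖ R := Module.compHom R (RingHom.op ι)
  have := RingHomInvPair.of_ringEquiv σ
  have := RingHomInvPair.of_ringEquiv σ.symm
  let e : R ≃ₛₗ[(σ : S →+* Sᵐᵒᵖ)] R :=
    { θ.toAddEquiv.trans opAddEquiv.symm with
      map_smul' s r := by
        change unop (θ (ι s * r)) = unop (θ r) * ι (unop (σ s))
        rw [map_mul, hι, unop_mul, unop_op] }
  exact Module.Free.of_equiv e

end Transpose

/-! ### The rational representation -/

section DiagonalCoefficients

variable {I : Type} [DecidableEq I] {N : ℕ} {K : Type} [Field K] (y : Fin N → K) (μ : Fin N → I)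

/-- The coefficient `-1 / (y_p - y_q)` (for equal labels) or `0` (for different labels) by which
`τ` acts on the diagonal. -/
def diagCoeff (p q : Fin N) : K := if μ p = μ q then -(y p - y q)⁻¹ else 0

variable {y} {p q r : Fin N}

theorem diagCoeff_symm (p q : Fin N) : diagCoeff y μ q p = -diagCoeff y μ p q := by
  unfold diagCoeff
  by_cases h : μ p = μ q
  · rw [if_pos h, if_pos h.symm, ← neg_sub (y p), inv_neg]
  · rw [if_neg h, if_neg (Ne.symm h), neg_zero]

theorem diagCoeff_mul_sub (hpq : y p ≠ y q) :
    diagCoeff y μ p q * (y p - y q) = if μ p = μ q then -1 else 0 := by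
  unfold diagCoeff
  split_ifs
  · rw [neg_mul, inv_mul_cancel₀ (sub_ne_zero.2 hpq)]
  · exact zero_mul _

theorem diagCoeff_yangBaxter (hpq : y p ≠ y q) (hpr : y p ≠ y r) (hqr : y q ≠ y r) :
    diagCoeff y μ q r * diagCoeff y μ p q =
      diagCoeff y μ p r * (diagCoeff y μ q r + diagCoeff y μ p q) := by
  have := sub_ne_zero.2 hpq
  have := sub_ne_zero.2 hpr
  have := sub_ne_zero.2 hqr
  unfold diagCoeff
  split_ifs <;> try simp_all
  field_simp
  ring

end DiagonalCoefficients

section Coefficients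

variable {k : Type} [Field k] {I : Type} [Fintype I] [DecidableEq I]

variable (C : CartanDatum k I)

theorem Qel_symm {A : Type} [CommRing A] [Algebra k A] (i j : I) (u v : A) :
    Qel C i j u v = Qel C j i v u := by
  unfold Qel
  by_cases h : i = j
  · simp [h]
  · rw [if_neg h, if_neg (Ne.symm h), Finset.sum_comm]
    refine Finset.sum_congr rfl fun q _ => Finset.sum_congr rfl fun p _ => ?_
    rw [C.t_symm i j p q, mul_comm (u ^ p), C.symmetrize i j, add_comm]

theorem Qdiff_mul_sub {A : Type} [CommRing A] [Algebra k A] (i j : I) (u v w : A) :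
    Qdiff C i j u v w * (u - w) = Qel C i j u v - Qel C i j w v := by
  unfold Qdiff Qel
  split_ifs with h
  · simp
  · rw [Finset.sum_mul, ← Finset.sum_sub_distrib]
    refine Finset.sum_congr rfl fun p _ => ?_
    rw [Finset.sum_mul, ← Finset.sum_sub_distrib]
    refine Finset.sum_congr rfl fun q _ => ?_
    split_ifs
    · rw [← smul_sub, smul_mul_assoc, ← sub_mul, ← geom_sum₂_mul u w p,
        mul_right_comm]
    · simp

theorem Qel_one_zero {i j : I} (h : i ≠ j) :
    Qel C i j (1 : k) 0 = C.t i j (-(C.a i j)).toNat 0 := by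
  have hd := C.d_pos i
  have ha := C.a_nonpos i j h
  have degree_iff (p : ℕ) : C.d i * (p : ℤ) + C.d j * ((0 : ℕ) : ℤ) = -(C.d i * C.a i j) ↔
      p = (-(C.a i j)).toNat := by
    rw [Nat.cast_zero, mul_zero, add_zero, ← mul_neg, mul_right_inj' hd.ne']
    omega
  rw [Qel, if_neg h, Finset.sum_comm, Finset.sum_eq_single 0]
  · simp only [degree_iff, Finset.sum_ite_eq']
    simp
  · intro q _ hq
    simp [hq]
  · simp

variable {N : ℕ} {K : Type} [Field K] [Algebra k K] {y : Fin N → K} (μ : Fin N → I)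

theorem Qel_ne_zero (hy : AlgebraicIndependent k y) {p q : Fin N} (hpq : μ p ≠ μ q) :
    Qel C (μ p) (μ q) (y p) (y q) ≠ 0 := by
  let X : Fin N → MvPolynomial (Fin N) k := MvPolynomial.X
  suffices h : Qel C (μ p) (μ q) (X p) (X q) ≠ 0 by
    simpa [X, map_Qel] using (map_ne_zero_iff (MvPolynomial.aeval y) hy).2 h
  intro h
  have heval := congrArg (MvPolynomial.aeval fun z => if z = p then (1 : k) else 0) h
  have hqp : q ≠ p := fun h => hpq (h ▸ rfl)
  rw [map_zero, map_Qel, MvPolynomial.aeval_X, MvPolynomial.aeval_X, if_pos rfl, if_neg hqp,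
    Qel_one_zero C hpq] at heval
  exact C.t_lead _ _ hpq heval

variable (y)

/-- The product of the two opposite off-diagonal coefficients of `τ`, forced by the quadratic
relation. -/
def offDiagProd (p q : Fin N) : K :=
  if μ p = μ q then -((y p - y q)⁻¹ ^ 2) else Qel C (μ p) (μ q) (y p) (y q)

/-- The off-diagonal coefficient of `τ`. Only the products of opposite coefficients matter; they
are split as `1 * offDiagProd`. -/
def offDiagCoeff (p q : Fin N) : K := if p < q then 1 else offDiagProd C y μ p q

variable {y} {p q r : Fin N}

theorem offDiagProd_symm (p q : Fin N) : offDiagProd C y μ q p = offDiagProd C y μ p q := by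
  unfold offDiagProd
  by_cases h : μ p = μ q
  · rw [if_pos h, if_pos h.symm, ← neg_sub (y p), inv_neg, neg_sq]
  · rw [if_neg h, if_neg (Ne.symm h), Qel_symm]

theorem offDiagCoeff_mul (hpq : p ≠ q) :
    offDiagCoeff C y μ p q * offDiagCoeff C y μ q p = offDiagProd C y μ p q := by
  unfold offDiagCoeff
  rcases hpq.lt_or_gt with h | h
  · rw [if_pos h, if_neg h.not_gt, one_mul, offDiagProd_symm]
  · rw [if_pos h, if_neg h.not_gt, mul_one]

theorem offDiagCoeff_ne_zero (hy : AlgebraicIndependent k y) (hpq : p ≠ q) :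
    offDiagCoeff C y μ p q ≠ 0 := by
  unfold offDiagCoeff offDiagProd
  split_ifs with hlt hμ
  · exact one_ne_zero
  · exact neg_ne_zero.2 (pow_ne_zero 2 (inv_ne_zero (sub_ne_zero.2 (hy.injective.ne hpq))))
  · exact Qel_ne_zero C μ hy hμ

theorem diagCoeff_sq_add (p q : Fin N) :
    diagCoeff y μ p q ^ 2 + offDiagProd C y μ p q = Qel C (μ p) (μ q) (y p) (y q) := by
  unfold diagCoeff offDiagProd
  split_ifs with h
  · rw [Qel, if_pos h]
    ring
  · simp

theorem diagCoeff_mul_offDiagProd_sub (hpr : y p ≠ y r) (hμ : μ p ≠ μ q) :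
    diagCoeff y μ p r * (offDiagProd C y μ q r - offDiagProd C y μ p q) =
      if μ p = μ r then Qdiff C (μ p) (μ q) (y p) (y q) (y r) else 0 := by
  by_cases hμpr : μ p = μ r
  · have hμqr : μ q ≠ μ r := fun h => hμ (hμpr.trans h.symm)
    rw [if_pos hμpr, ← mul_left_inj' (sub_ne_zero.2 hpr), Qdiff_mul_sub, mul_right_comm,
      diagCoeff_mul_sub μ hpr, if_pos hμpr, offDiagProd, if_neg hμqr, offDiagProd, if_neg hμ,
      Qel_symm, ← hμpr]
    ring
  · simp [diagCoeff, hμpr]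

theorem diagCoeff_braid (hpq : y p ≠ y q) (hpr : y p ≠ y r) (hqr : y q ≠ y r) :
    diagCoeff y μ p q * diagCoeff y μ q r ^ 2 - diagCoeff y μ q r * diagCoeff y μ p q ^ 2 +
        diagCoeff y μ p r * (offDiagProd C y μ q r - offDiagProd C y μ p q) =
      if μ p = μ r then Qdiff C (μ p) (μ q) (y p) (y q) (y r) else 0 := by
  have hyb := diagCoeff_yangBaxter μ hpq hpr hqr
  by_cases hμpq : μ p = μ q
  · have hQdiff : Qdiff C (μ p) (μ q) (y p) (y q) (y r) = 0 := if_pos hμpq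
    have hprod : diagCoeff y μ p r * (offDiagProd C y μ q r - offDiagProd C y μ p q) =
        diagCoeff y μ p r * (diagCoeff y μ p q ^ 2 - diagCoeff y μ q r ^ 2) := by
      by_cases hμqr : μ q = μ r
      · simp only [offDiagProd, diagCoeff, hμpq, hμqr, if_true]
        ring
      · simp [diagCoeff, hμpq, hμqr]
    rw [hprod, hQdiff, ite_self]
    linear_combination (diagCoeff y μ q r - diagCoeff y μ p q) * hyb
  · rw [← diagCoeff_mul_offDiagProd_sub C μ hpr hμpq]
    simp [diagCoeff, hμpq]

end Coefficients

section DiagonalOperators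

variable {k : Type} [Field k] {I : Type} [DecidableEq I] {N : ℕ} {K : Type} [Field K] [Algebra k K]
  (y : Fin N → K) (μ : Fin N → I)

variable (k N K) in
/-- Multiplication operators on the space of functions on permutations. -/
noncomputable def diag :
    (Equiv.Perm (Fin N) → K) →ₐ[k] Module.End K (Equiv.Perm (Fin N) → K) :=
  (Algebra.lmul K (Equiv.Perm (Fin N) → K)).restrictScalars k

@[simp] theorem diag_apply (g f : Equiv.Perm (Fin N) → K) (σ : Equiv.Perm (Fin N)) :
    diag k N K g f σ = g σ * f σ := rfl

/-- The function of `σ` by which `x_a` acts. -/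
def coordFun (a : Fin N) : Equiv.Perm (Fin N) → K := fun σ => y (σ a)

variable (K) in
/-- The function of `σ` by which `e(ν)` acts: the indicator function of `μ ∘ σ = ν`. -/
def labelFun (ν : Fin N → I) : Equiv.Perm (Fin N) → K := fun σ => if μ ∘ σ = ν then 1 else 0

theorem diag_mul_labelFun_congr {g h : Equiv.Perm (Fin N) → K} {ν : Fin N → I}
    (hgh : ∀ σ : Equiv.Perm (Fin N), μ ∘ σ = ν → g σ = h σ) :
    diag k N K g * diag k N K (labelFun K μ ν) = diag k N K h * diag k N K (labelFun K μ ν) := by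
  rw [← map_mul, ← map_mul]
  congr 1
  ext σ
  by_cases hσ : μ ∘ σ = ν
  · rw [Pi.mul_apply, hgh σ hσ, Pi.mul_apply]
  · simp [labelFun, hσ]

variable {y}

theorem coordFun_sub_mul_diagCoeff (hy : y.Injective) (l : ℕ) (h : l + 1 < N) (a : Fin N)
    (σ : Equiv.Perm (Fin N)) :
    diagCoeff y μ (σ ⟨l, Nat.lt_of_succ_lt h⟩) (σ ⟨l + 1, h⟩) *
        (coordFun y a σ - coordFun y (simpleSwap l h a) σ) = crossingSign l h a (μ ∘ σ) := by
  have hmul := diagCoeff_mul_sub μ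
    (hy.ne (σ.injective.ne (show (⟨l, Nat.lt_of_succ_lt h⟩ : Fin N) ≠ ⟨l + 1, h⟩ by simp)))
  unfold coordFun crossingSign
  by_cases hl : a = ⟨l, Nat.lt_of_succ_lt h⟩
  · subst hl
    simp [hmul]
  by_cases hr : a = ⟨l + 1, h⟩
  · subst hr
    rw [← neg_sub, mul_neg, Equiv.swap_apply_right, hmul]
    simp
    split_ifs <;> simp
  · simp [Equiv.swap_apply_of_ne_of_ne hl hr, hl, hr]

end DiagonalOperators

section Representation

variable {k : Type} [Field k] {I : Type} [Fintype I] [DecidableEq I] (C : CartanDatum k I) {N : ℕ}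
  {K : Type} [Field K] [Algebra k K] (y : Fin N → K) (μ : Fin N → I)

theorem Qel_apply {X : Type} (i j : I) (u v : X → K) (σ : X) :
    Qel C i j u v σ = Qel C i j (u σ) (v σ) :=
  map_Qel C (Pi.evalAlgHom k (fun _ => K) σ) i j u v

theorem Qdiff_apply {X : Type} (i j : I) (u v w : X → K) (σ : X) :
    Qdiff C i j u v w σ = Qdiff C i j (u σ) (v σ) (w σ) :=
  map_Qdiff C (Pi.evalAlgHom k (fun _ => K) σ) i j u v w

/-- The operator by which `τ_l` acts, for `a = l` and `b = l + 1`. -/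
def exchange (a b : Fin N) : Module.End K (Equiv.Perm (Fin N) → K) where
  toFun f σ := diagCoeff y μ (σ a) (σ b) * f σ +
    offDiagCoeff C y μ (σ a) (σ b) * f (σ * Equiv.swap a b)
  map_add' f g := by
    ext σ
    simp only [Pi.add_apply]
    ring
  map_smul' c f := by
    ext σ
    simp only [Pi.smul_apply, smul_eq_mul, RingHom.id_apply]
    ring

theorem exchange_apply (a b : Fin N) (f : Equiv.Perm (Fin N) → K) (σ : Equiv.Perm (Fin N)) :
    exchange C y μ a b f σ = diagCoeff y μ (σ a) (σ b) * f σ +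
      offDiagCoeff C y μ (σ a) (σ b) * f (σ * Equiv.swap a b) := rfl

theorem exchange_mul_diag_sub (a b : Fin N) (g h : Equiv.Perm (Fin N) → K)
    (hgh : ∀ σ, h σ = g (σ * Equiv.swap a b)) :
    exchange C y μ a b * diag k N K g - diag k N K h * exchange C y μ a b =
      diag k N K fun σ => diagCoeff y μ (σ a) (σ b) * (g σ - h σ) := by
  refine LinearMap.ext fun f => funext fun σ => ?_
  simp only [Module.End.mul_apply, diag_apply, exchange_apply, LinearMap.sub_apply, Pi.sub_apply,
    hgh]
  ring

theorem exchange_mul_labelFun (a b : Fin N) (ν : Fin N → I) :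
    exchange C y μ a b * diag k N K (labelFun K μ ν) =
      diag k N K (labelFun K μ (ν ∘ Equiv.swap a b)) * exchange C y μ a b := by
  have comp_swap_eq (σ : Equiv.Perm (Fin N)) :
      μ ∘ σ = ν ∘ Equiv.swap a b ↔ μ ∘ (σ * Equiv.swap a b) = ν := by
    rw [Equiv.Perm.coe_mul, ← Function.comp_assoc,
      ← (Equiv.swap a b).surjective.injective_comp_right.eq_iff]
    simp [Function.comp_assoc, ← Equiv.Perm.coe_mul]
  rw [← sub_eq_zero, exchange_mul_diag_sub C y μ a b _ _ fun σ => by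
    simp only [labelFun, comp_swap_eq]]
  refine (congrArg (diag k N K) (funext fun σ => ?_)).trans (map_zero _)
  by_cases h : μ (σ a) = μ (σ b)
  · simp [labelFun, comp_swap_eq, ← Function.comp_assoc,
      comp_swap_of_eq (ν := μ ∘ σ) (a := a) (b := b) h]
  · simp [diagCoeff, h]

variable {y}

theorem exchange_sq {a b : Fin N} (hab : a ≠ b) :
    exchange C y μ a b ^ 2 = diag k N K fun σ =>
      Qel C (μ (σ a)) (μ (σ b)) (y (σ a)) (y (σ b)) := by
  refine LinearMap.ext fun f => funext fun σ => ?_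
  rw [diag_apply, ← diagCoeff_sq_add, ← offDiagCoeff_mul C μ (σ.injective.ne hab)]
  simp only [pow_two, Module.End.mul_apply, exchange_apply, Equiv.Perm.mul_apply,
    Equiv.swap_apply_left, Equiv.swap_apply_right, diagCoeff_symm μ (σ a), mul_assoc,
    Equiv.swap_mul_self, mul_one]
  ring

theorem commute_exchange {a b c d : Fin N} (hac : a ≠ c) (had : a ≠ d) (hbc : b ≠ c)
    (hbd : b ≠ d) (hab : a ≠ b) (hcd : c ≠ d) :
    Commute (exchange C y μ a b) (exchange C y μ c d) := by
  refine LinearMap.ext fun f => funext fun σ => ?_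
  have hswap : Equiv.swap c d * Equiv.swap a b = Equiv.swap a b * Equiv.swap c d := by
    refine (Equiv.Perm.disjoint_swap_swap ?_).commute
    simp [hac.symm, had.symm, hbc.symm, hbd.symm, hab, hcd]
  simp only [Module.End.mul_apply, exchange_apply, Equiv.Perm.mul_apply, mul_assoc, hswap,
    Equiv.swap_apply_of_ne_of_ne hac had, Equiv.swap_apply_of_ne_of_ne hbc hbd,
    Equiv.swap_apply_of_ne_of_ne hac.symm hbc.symm, Equiv.swap_apply_of_ne_of_ne had.symm hbd.symm]
  ring

theorem exchange_braid (hy : y.Injective) {a b c : Fin N} (hab : a ≠ b) (hac : a ≠ c)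
    (hbc : b ≠ c) :
    exchange C y μ b c * exchange C y μ a b * exchange C y μ b c -
        exchange C y μ a b * exchange C y μ b c * exchange C y μ a b =
      diag k N K fun σ => if μ (σ a) = μ (σ c) then
        Qdiff C (μ (σ a)) (μ (σ b)) (y (σ a)) (y (σ b)) (y (σ c)) else 0 := by
  refine LinearMap.ext fun f => funext fun σ => ?_
  have hyσ {p q : Fin N} (hpq : p ≠ q) : y (σ p) ≠ y (σ q) := hy.ne (σ.injective.ne hpq)
  have hswap : Equiv.swap b c * (Equiv.swap a b * Equiv.swap b c) =
      Equiv.swap a b * (Equiv.swap b c * Equiv.swap a b) := by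
    rw [← mul_assoc, Equiv.swap_mul_swap_mul_swap hab hac, ← mul_assoc, Equiv.swap_comm a b,
      Equiv.swap_comm b c, Equiv.swap_mul_swap_mul_swap hbc.symm hac.symm, Equiv.swap_comm]
  rw [diag_apply, ← diagCoeff_braid C μ (hyσ hab) (hyσ hac) (hyσ hbc),
    ← offDiagCoeff_mul C μ (σ.injective.ne hbc), ← offDiagCoeff_mul C μ (σ.injective.ne hab)]
  simp only [Module.End.mul_apply, exchange_apply, LinearMap.sub_apply, Pi.sub_apply,
    Equiv.Perm.mul_apply, mul_assoc, Equiv.swap_apply_left, Equiv.swap_apply_right, hswap,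
    Equiv.swap_mul_self, mul_one,
    Equiv.swap_apply_of_ne_of_ne hab hac, Equiv.swap_apply_of_ne_of_ne hac.symm hbc.symm]
  rw [diagCoeff_symm μ (σ a) (σ b), diagCoeff_symm μ (σ b) (σ c)]
  linear_combination (offDiagCoeff C y μ (σ b) (σ c) * f (σ * Equiv.swap b c) -
    offDiagCoeff C y μ (σ a) (σ b) * f (σ * Equiv.swap a b)) *
      diagCoeff_yangBaxter μ (hyσ hab) (hyσ hac) (hyσ hbc)

variable (y) in
/-- The representation of `R(N)` on functions on permutations. -/
noncomputable def rationalFamily (hy : y.Injective) :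
    KLRFamily C N (Module.End K (Equiv.Perm (Fin N) → K)) where
  e ν := diag k N K (labelFun K μ ν)
  x a := diag k N K (coordFun y a)
  t l h := exchange C y μ ⟨l, Nat.lt_of_succ_lt h⟩ ⟨l + 1, h⟩
  e_mul_e ν ν' := by
    rw [← map_mul, ← map_zero (diag k N K), ← apply_ite (diag k N K)]
    congr 1
    ext σ
    simp only [labelFun, Pi.mul_apply]
    split_ifs <;> simp_all [labelFun]
  sum_e := by
    rw [← map_sum, ← map_one (diag k N K)]
    congr 1
    ext σ
    simp [labelFun, Finset.sum_apply]
  commute_x a b := (Commute.all _ _).map (diag k N K)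
  commute_x_e a ν := (Commute.all _ _).map (diag k N K)
  t_mul_e l h ν := exchange_mul_labelFun C y μ _ _ ν
  commute_t l h l' h' hl := commute_exchange C μ (by simp; omega) (by simp; omega) (by simp; omega)
    (by simp; omega) (by simp) (by simp)
  t_sq_mul_e l h ν := by
    rw [exchange_sq C μ (by simp), ← map_Qel]
    refine diag_mul_labelFun_congr μ fun σ hσ => ?_
    subst hσ
    rw [Qel_apply]
    rfl
  t_mul_x_mul_e l h a ν := by
    have hsign : crossingSign l h a ν • diag k N K (labelFun K μ ν) =
        diag k N K (fun _ => crossingSign l h a ν) * diag k N K (labelFun K μ ν) := by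
      rw [← map_zsmul, ← map_mul]
      congr 1
      ext σ
      simp
    rw [exchange_mul_diag_sub C y μ _ _ _ (coordFun y (simpleSwap l h a)) fun σ => rfl, hsign]
    refine diag_mul_labelFun_congr μ fun σ hσ => ?_
    subst hσ
    exact coordFun_sub_mul_diagCoeff μ hy l h a σ
  braid_mul_e l h ν := by
    rw [exchange_braid C μ hy (c := ⟨l + 2, h⟩) (by simp) (by simp) (by simp), ← map_Qdiff,
      ← map_zero (diag k N K), ← apply_ite (diag k N K)]
    refine diag_mul_labelFun_congr μ fun σ hσ => ?_
    subst hσ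
    simp only [apply_ite (fun g : Equiv.Perm (Fin N) → K => g σ), Qdiff_apply]
    rfl

end Representation

/-! ### Polynomial generating families -/

section Evaluation

variable {k : Type} [Field k] {σ : Type} {A B : Type} [Semiring A] [Algebra k A] [Semiring B]
  [Algebra k B]

open scoped IsMulCommutative in
/-- Evaluation of polynomials at commuting elements of a possibly noncommutative algebra. -/
noncomputable def commEval (x : σ → A) (hx : ∀ a b, Commute (x a) (x b)) :
    MvPolynomial σ k →ₐ[k] A :=
  haveI : IsMulCommutative (Algebra.adjoin k (Set.range x)) :=
    Algebra.isMulCommutative_adjoin k (by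
      rintro _ ⟨a, rfl⟩ _ ⟨b, rfl⟩
      exact hx a b)
  (Algebra.adjoin k (Set.range x)).val.comp
    (MvPolynomial.aeval fun a => ⟨x a, Algebra.subset_adjoin ⟨a, rfl⟩⟩)

@[simp] theorem commEval_X (x : σ → A) (hx : ∀ a b, Commute (x a) (x b)) (a : σ) :
    commEval (k := k) x hx (MvPolynomial.X a) = x a := by
  simp [commEval]

theorem algHom_comp_commEval (φ : A →ₐ[k] B) (x : σ → A) (hx : ∀ a b, Commute (x a) (x b)) :
    φ.comp (commEval x hx) = commEval (φ ∘ x) fun a b => (hx a b).map φ :=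
  MvPolynomial.algHom_ext fun a => by simp

end Evaluation

section LabelledPolynomials

variable {k : Type} [Field k] {I : Type} [Fintype I] {N : ℕ}

variable (k I N) in
/-- The polynomial algebra `⨁_ν k[X_1, …, X_N] e(ν)`. -/
abbrev LabelledPoly : Type := (Fin N → I) → MvPolynomial (Fin N) k

/-- The map `f ↦ ∑_ν f_ν(x) e(ν)`. -/
noncomputable def labelledEval {A : Type} [Semiring A] [Algebra k A] (e : (Fin N → I) → A)
    (x : Fin N → A) (hx : ∀ a b, Commute (x a) (x b)) : LabelledPoly k I N →ₗ[k] A :=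
  ∑ ν, LinearMap.mulRight k (e ν) ∘ₗ (commEval x hx).toLinearMap ∘ₗ LinearMap.proj ν

theorem labelledEval_apply {A : Type} [Semiring A] [Algebra k A] (e : (Fin N → I) → A)
    (x : Fin N → A) (hx : ∀ a b, Commute (x a) (x b)) (f : LabelledPoly k I N) :
    labelledEval e x hx f = ∑ ν, commEval x hx (f ν) * e ν := by
  simp [labelledEval, LinearMap.sum_apply]

theorem map_labelledEval {A B : Type} [Semiring A] [Algebra k A] [Semiring B] [Algebra k B]
    (φ : A →ₐ[k] B) (e : (Fin N → I) → A) (x : Fin N → A) (hx : ∀ a b, Commute (x a) (x b))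
    (f : LabelledPoly k I N) :
    φ (labelledEval e x hx f) = labelledEval (φ ∘ e) (φ ∘ x) (fun a b => (hx a b).map φ) f := by
  simp only [labelledEval_apply, map_sum, map_mul]
  exact Finset.sum_congr rfl fun ν _ =>
    congrArg (· * φ (e ν)) (DFunLike.congr_fun (algHom_comp_commEval φ x hx) (f ν))

end LabelledPolynomials

section Row

variable {k : Type} [Field k] {I : Type} [Fintype I] [DecidableEq I] (C : CartanDatum k I)

variable {C} in
theorem commute_Xx {N : ℕ} (a b : Fin N) : Commute (Xx C a) (Xx C b) :=
  (generators C N).commute_x a b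

/-- The map `⨁_ν k[X_1, …, X_N] e(ν) → R(N)`. -/
noncomputable def polyMap (N : ℕ) : LabelledPoly k I N →ₗ[k] Alg C N :=
  labelledEval (Ee C) (Xx C) commute_Xx

variable {N : ℕ} {C}

/-- The family `b` generates `R(N)` as a left module over `⨁_ν k[X_1, …, X_N] e(ν)`. -/
def IsPolyGenerating {ι : Type} [Fintype ι] (b : ι → Alg C N) : Prop :=
  ∀ r, ∃ f : ι → LabelledPoly k I N, ∑ i, polyMap C N (f i) * b i = r

variable (C) {K : Type} [Field K] [Algebra k K] (y : Fin N → K) (μ : Fin N → I)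

theorem lift_polyMap (hy : y.Injective) (f : LabelledPoly k I N) :
    (rationalFamily C y μ hy).lift (polyMap C N f) =
      diag k N K fun σ => MvPolynomial.aeval (y ∘ σ) (f (μ ∘ σ)) := by
  have hcoord : (rationalFamily C y μ hy).lift.comp (commEval (Xx C) commute_Xx) =
      (diag k N K).comp (MvPolynomial.aeval (coordFun y)) :=
    MvPolynomial.algHom_ext fun a => by simp [rationalFamily]
  have hν (ν : Fin N → I) : (rationalFamily C y μ hy).lift
      (commEval (Xx C) commute_Xx (f ν) * Ee C ν) =
        diag k N K (MvPolynomial.aeval (coordFun y) (f ν) * labelFun K μ ν) := by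
    rw [map_mul, map_mul, ← AlgHom.comp_apply, hcoord, KLRFamily.lift_e]
    rfl
  rw [polyMap, labelledEval_apply, map_sum, Finset.sum_congr rfl fun ν _ => hν ν, ← map_sum]
  congr 1
  ext σ
  have haeval (p : MvPolynomial (Fin N) k) :
      MvPolynomial.aeval (coordFun y) p σ = MvPolynomial.aeval (y ∘ σ) p :=
    DFunLike.congr_fun (MvPolynomial.algHom_ext
      (f := (Pi.evalAlgHom k (fun _ => K) σ).comp (MvPolynomial.aeval (coordFun y)))
      (g := MvPolynomial.aeval (y ∘ σ)) fun a => by simp [coordFun]) p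
  simp [Finset.sum_apply, labelFun, haeval]

/-- The first row of the matrix by which an element of `R(N)` acts in the rational
representation. -/
noncomputable def row (hy : y.Injective) :
    Alg C N →ₗ[k] Module.Dual K (Equiv.Perm (Fin N) → K) where
  toFun r := LinearMap.proj (1 : Equiv.Perm (Fin N)) ∘ₗ (rationalFamily C y μ hy).lift r
  map_add' r s := by rw [map_add, LinearMap.comp_add]
  map_smul' c r := by
    rw [map_smul]
    rfl

theorem row_polyMap_mul (hy : y.Injective) (f : LabelledPoly k I N) (r : Alg C N) :
    row C y μ hy (polyMap C N f * r) = MvPolynomial.aeval y (f μ) • row C y μ hy r := by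
  refine LinearMap.ext fun g => ?_
  simp [row, lift_polyMap]

theorem row_mul (hy : y.Injective) (r s : Alg C N) :
    row C y μ hy (r * s) = row C y μ hy r ∘ₗ (rationalFamily C y μ hy).lift s := by
  simp [row, Module.End.mul_eq_comp, LinearMap.comp_assoc]

theorem comp_lift_mem_span_row {hy : y.Injective} {φ : Module.Dual K (Equiv.Perm (Fin N) → K)}
    (hφ : φ ∈ Submodule.span K (Set.range (row C y μ hy))) (s : Alg C N) :
    φ ∘ₗ (rationalFamily C y μ hy).lift s ∈ Submodule.span K (Set.range (row C y μ hy)) := by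
  induction hφ using Submodule.span_induction with
  | mem φ hφ =>
    obtain ⟨r, rfl⟩ := hφ
    exact Submodule.subset_span ⟨r * s, row_mul C y μ hy r s⟩
  | zero => simp
  | add φ ψ _ _ hφ hψ =>
    rw [LinearMap.add_comp]
    exact add_mem hφ hψ
  | smul c φ _ hφ =>
    rw [LinearMap.smul_comp]
    exact Submodule.smul_mem _ c hφ

variable {y} in
theorem proj_mul_simpleSwap_mem_span_row (hy : AlgebraicIndependent k y)
    {σ : Equiv.Perm (Fin N)}
    (hσ : LinearMap.proj σ ∈ Submodule.span K (Set.range (row C y μ hy.injective)))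
    (l : ℕ) (h : l + 1 < N) :
    LinearMap.proj (σ * simpleSwap l h) ∈
      Submodule.span K (Set.range (row C y μ hy.injective)) := by
  set a : Fin N := ⟨l, Nat.lt_of_succ_lt h⟩
  set b : Fin N := ⟨l + 1, h⟩
  have hab : σ a ≠ σ b := σ.injective.ne (by simp [a, b])
  have hτ := comp_lift_mem_span_row C y μ hσ (Tt C l h)
  have hexchange : LinearMap.proj σ ∘ₗ (rationalFamily C y μ hy.injective).lift (Tt C l h) =
      diagCoeff y μ (σ a) (σ b) • LinearMap.proj σ +
        offDiagCoeff C y μ (σ a) (σ b) • LinearMap.proj (σ * simpleSwap l h) := by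
    refine LinearMap.ext fun f => ?_
    simp [rationalFamily, exchange_apply, a, b]
  rw [hexchange, Submodule.add_mem_iff_right _ (Submodule.smul_mem _ _ hσ),
    Submodule.smul_mem_iff _ (offDiagCoeff_ne_zero C μ hy hab)] at hτ
  exact hτ

theorem perm_induction_simpleSwap {P : Equiv.Perm (Fin N) → Prop} (one : P 1)
    (mul_simpleSwap : ∀ σ l (h : l + 1 < N), P σ → P (σ * simpleSwap l h))
    (σ : Equiv.Perm (Fin N)) : P σ := by
  obtain _ | N := N
  · rwa [Subsingleton.elim σ 1]
  have hσ : σ ∈ Submonoid.closure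
      (Set.range fun i : Fin N => Equiv.swap i.castSucc i.succ) := by
    rw [Equiv.Perm.mclosure_swap_castSucc_succ]
    exact Submonoid.mem_top σ
  induction hσ using Submonoid.closure_induction_right with
  | one => exact one
  | mul_right σ _ _ hs ih =>
    obtain ⟨i, rfl⟩ := hs
    exact mul_simpleSwap σ i (by omega) ih

variable {y} in
theorem span_row (hy : AlgebraicIndependent k y) :
    Submodule.span K (Set.range (row C y μ hy.injective)) = ⊤ := by
  have proj_mem (σ : Equiv.Perm (Fin N)) :
      LinearMap.proj σ ∈ Submodule.span K (Set.range (row C y μ hy.injective)) := by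
    induction σ using perm_induction_simpleSwap with
    | one =>
      refine Submodule.subset_span ⟨1, ?_⟩
      rw [row, LinearMap.coe_mk, AddHom.coe_mk, map_one]
      rfl
    | mul_simpleSwap σ l h hσ => exact proj_mul_simpleSwap_mem_span_row C μ hy hσ l h
  refine eq_top_iff.2 fun φ _ => ?_
  have hφ : φ = ∑ σ, φ (Pi.single σ 1) • LinearMap.proj σ := by
    refine LinearMap.pi_ext' fun σ => LinearMap.ext_ring ?_
    simp [Pi.single_apply]
  rw [hφ]
  exact Submodule.sum_mem _ fun σ _ => Submodule.smul_mem _ _ (proj_mem σ)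

variable {C} in
theorem linearIndependent_row {ι : Type} [Fintype ι] {b : ι → Alg C N} (hb : IsPolyGenerating b)
    (hcard : Fintype.card ι = N.factorial) (hy : AlgebraicIndependent k y) :
    LinearIndependent K fun i => row C y μ hy.injective (b i) := by
  refine linearIndependent_of_top_le_span_of_card_eq_finrank ?_ ?_
  · rw [← span_row C μ hy, Submodule.span_le]
    rintro _ ⟨r, rfl⟩
    obtain ⟨f, rfl⟩ := hb r
    rw [map_sum]
    refine Submodule.sum_mem _ fun i _ => ?_
    rw [row_polyMap_mul]
    exact Submodule.smul_mem _ _ (Submodule.subset_span ⟨i, rfl⟩)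
  · rw [Subspace.dual_finrank_eq, Module.finrank_fintype_fun_eq_card, Fintype.card_perm,
      Fintype.card_fin, hcard]

end Row

section Independence

variable {k : Type} [Field k] {I : Type} [Fintype I] [DecidableEq I] {N : ℕ} {C : CartanDatum k I}

theorem algebraicIndependent_fractionRing_X (σ : Type) : AlgebraicIndependent k fun a : σ =>
    algebraMap (MvPolynomial σ k) (FractionRing (MvPolynomial σ k)) (MvPolynomial.X a) := by
  exact (MvPolynomial.algebraicIndependent_X σ k).map'
    (f := IsScalarTower.toAlgHom k (MvPolynomial σ k) (FractionRing (MvPolynomial σ k)))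
    (IsFractionRing.injective _ _)

/-- Comparing ranks, `N!` generators are independent: their rows span the `N!`-dimensional dual of
the rational representation, for every choice of labels. -/
theorem IsPolyGenerating.eq_zero {ι : Type} [Fintype ι] {b : ι → Alg C N}
    (hb : IsPolyGenerating b) (hcard : Fintype.card ι = N.factorial)
    {f : ι → LabelledPoly k I N} (hf : ∑ i, polyMap C N (f i) * b i = 0) : f = 0 := by
  refine funext fun i => funext fun μ => ?_
  have hy := algebraicIndependent_fractionRing_X (k := k) (Fin N)
  have hrow := congrArg (row C _ μ hy.injective) hf
  simp only [map_sum, row_polyMap_mul, map_zero] at hrow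
  have hcoeff := Fintype.linearIndependent_iff.1 (linearIndependent_row _ μ hb hcard hy) _ hrow i
  exact (map_eq_zero_iff _ hy).1 hcoeff

end Independence

/-! ### Shuffles -/

section Words

open scoped Finset

variable {N : ℕ}

/-- The word `w` has a descent at `l`: its entries at `l`, `l + 1` are `true`, `false`. -/
def IsDescent (w : Fin N → Bool) (l : ℕ) (h : l + 1 < N) : Prop :=
  w ⟨l, Nat.lt_of_succ_lt h⟩ = true ∧ w ⟨l + 1, h⟩ = false

/-- The sum of the positions of the letters `false`: the number of inversions up to a constant. -/
def weight (w : Fin N → Bool) : ℕ := ∑ a : Fin N, if w a then 0 else a.val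

theorem comp_simpleSwap_of_ne (w : Fin N → Bool) {l : ℕ} {h : l + 1 < N} {a : Fin N}
    (hl : a.val ≠ l) (hl' : a.val ≠ l + 1) : (w ∘ simpleSwap l h) a = w a :=
  congrArg w (Equiv.swap_apply_of_ne_of_ne (Fin.ne_of_val_ne hl) (Fin.ne_of_val_ne hl'))

theorem comp_simpleSwap_comp_simpleSwap (w : Fin N → Bool) (l : ℕ) (h : l + 1 < N) :
    (w ∘ simpleSwap l h) ∘ simpleSwap l h = w := by
  ext a
  simp

theorem comp_simpleSwap_comm (w : Fin N → Bool) {l l' : ℕ} {h : l + 1 < N} {h' : l' + 1 < N}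
    (hll : l + 1 < l' ∨ l' + 1 < l) :
    (w ∘ simpleSwap l h) ∘ simpleSwap l' h' = (w ∘ simpleSwap l' h') ∘ simpleSwap l h := by
  have hcomm : Commute (simpleSwap l h) (simpleSwap l' h') :=
    (Equiv.Perm.disjoint_swap_swap (by simp; omega)).commute
  rw [Function.comp_assoc, Function.comp_assoc, ← Equiv.Perm.coe_mul, hcomm.eq,
    Equiv.Perm.coe_mul]

namespace IsDescent

variable {w : Fin N → Bool} {l l' : ℕ} {h : l + 1 < N} {h' : l' + 1 < N}

theorem weight_comp_simpleSwap (hd : IsDescent w l h) :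
    weight (w ∘ simpleSwap l h) + 1 = weight w := by
  have hone : ∑ a : Fin N, (if a = ⟨l + 1, h⟩ then 1 else 0) = 1 := by simp
  rw [weight, ← Equiv.sum_comp (simpleSwap l h), ← hone, ← Finset.sum_add_distrib, weight]
  refine Finset.sum_congr rfl fun a _ => ?_
  by_cases hal : a = ⟨l, Nat.lt_of_succ_lt h⟩
  · simp [hal, hd.1]
  by_cases hal' : a = ⟨l + 1, h⟩
  · simp [hal', hd.2]
  · simp [hal', Equiv.swap_apply_of_ne_of_ne hal hal']

theorem far_of_ne (hd : IsDescent w l h) (hd' : IsDescent w l' h') (hne : l ≠ l') :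
    l + 1 < l' ∨ l' + 1 < l := by
  by_contra hnear
  obtain rfl | rfl : l' = l + 1 ∨ l = l' + 1 := by omega
  · exact absurd (hd.2.symm.trans hd'.1) Bool.false_ne_true
  · exact absurd (hd'.2.symm.trans hd.1) Bool.false_ne_true

theorem comp_simpleSwap_of_far (hd : IsDescent w l h) (hll : l + 1 < l' ∨ l' + 1 < l) :
    IsDescent (w ∘ simpleSwap l' h') l h := by
  constructor
  · rw [comp_simpleSwap_of_ne w (by dsimp only; omega) (by dsimp only; omega), hd.1]
  · rw [comp_simpleSwap_of_ne w (by dsimp only; omega) (by dsimp only; omega), hd.2]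

theorem comp_simpleSwap_of_near (hd : IsDescent w l h) (hll : l' = l + 1 ∨ l = l' + 1)
    (heq : w ⟨l', Nat.lt_of_succ_lt h'⟩ = w ⟨l' + 1, h'⟩) :
    IsDescent (w ∘ simpleSwap l h) l' h' := by
  obtain ⟨hl, hl'⟩ := hd
  rcases hll with rfl | rfl <;>
    constructor <;> simp only [Function.comp_apply, Equiv.swap_apply_def, Fin.mk.injEq] <;> grind

theorem apply_eq_of_near (hd : IsDescent w l h) (hll : l' = l + 1 ∨ l = l' + 1)
    (heq : w ⟨l', Nat.lt_of_succ_lt h'⟩ = w ⟨l' + 1, h'⟩) :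
    ((w ∘ simpleSwap l h) ∘ simpleSwap l' h') ⟨l, Nat.lt_of_succ_lt h⟩ =
      ((w ∘ simpleSwap l h) ∘ simpleSwap l' h') ⟨l + 1, h⟩ := by
  obtain ⟨hl, hl'⟩ := hd
  rcases hll with rfl | rfl <;>
    simp only [Function.comp_apply, Equiv.swap_apply_def, Fin.mk.injEq] <;> grind

end IsDescent

theorem isDescent_comp_simpleSwap {w : Fin N → Bool} {l : ℕ} {h : l + 1 < N}
    (hl : w ⟨l, Nat.lt_of_succ_lt h⟩ = false) (hl' : w ⟨l + 1, h⟩ = true) :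
    IsDescent (w ∘ simpleSwap l h) l h :=
  ⟨by simpa using hl', by simpa using hl⟩

theorem monotone_of_forall_not_isDescent {w : Fin N → Bool} (hw : ∀ l h, ¬IsDescent w l h) :
    Monotone w := by
  obtain _ | N := N
  · exact fun a => a.elim0
  · refine Fin.monotone_iff_le_succ.2 fun a => Bool.le_iff_imp.2 fun ha => ?_
    by_contra ha'
    exact hw a (by omega) ⟨ha, Bool.eq_false_iff.2 ha'⟩

theorem eq_of_monotone_of_card_eq {w w' : Fin N → Bool} (hw : Monotone w) (hw' : Monotone w')
    (hcard : #{a | w a} = #{a | w' a}) : w = w' := by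
  have isUpperSet {v : Fin N → Bool} (hv : Monotone v) : IsUpperSet {a | v a = true} :=
    fun _ _ hab ha => Bool.le_iff_imp.1 (hv hab) ha
  have eq_of_subset {v v' : Fin N → Bool} (hvv : {a | v a = true} ⊆ {a | v' a = true})
      (hc : #{a | v a} = #{a | v' a}) : v = v' := by
    have hfilter : ({a | v a} : Finset (Fin N)) = ({a | v' a} : Finset (Fin N)) :=
      Finset.eq_of_subset_of_card_le (fun a => by simpa using @hvv a) hc.ge
    exact funext fun a => Bool.eq_iff_iff.2 (by simpa using Finset.ext_iff.1 hfilter a)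
  rcases (isUpperSet hw).total (isUpperSet hw') with hsub | hsub
  · exact eq_of_subset hsub hcard
  · exact (eq_of_subset hsub hcard.symm).symm

end Words

section Shuffles

open scoped Finset

variable (m n : ℕ)

/-- Shuffles of `m` letters `false` and `n` letters `true`: they index the minimal representatives
of the right cosets of `S_m × S_n` in `S_{m+n}`. -/
abbrev Shuffle : Type := {w : Fin (m + n) → Bool // #{a | w a} = n}

/-- A word is determined by the set of the positions of its letters `true`. -/
def shuffleEquiv : Shuffle m n ≃ {s : Finset (Fin (m + n)) // #s = n} where
  toFun w := ⟨({a | w.1 a} : Finset (Fin (m + n))), w.2⟩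
  invFun s := ⟨fun a => decide (a ∈ s.1), by simpa using s.2⟩
  left_inv w := by ext; simp
  right_inv s := by ext; simp

theorem card_shuffle : Fintype.card (Shuffle m n) = (m + n).choose n := by
  rw [Fintype.card_congr (shuffleEquiv m n), Fintype.card_finset_len, Fintype.card_fin]

/-- The trivial shuffle `false^m true^n`. -/
def Shuffle.base : Shuffle m n :=
  ⟨fun a => decide (m ≤ a), by rw [Finset.card_filter, Fin.sum_univ_add]; simp⟩

variable {m n}

theorem Shuffle.monotone_base : Monotone (Shuffle.base m n).1 := fun _ _ hab =>
  Bool.le_iff_imp.2 fun ha => decide_eq_true ((of_decide_eq_true ha).trans hab)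

/-- The shuffle obtained by exchanging the letters in positions `l` and `l + 1`. -/
def Shuffle.swap (w : Shuffle m n) (l : ℕ) (h : l + 1 < m + n) : Shuffle m n :=
  ⟨w.1 ∘ simpleSwap l h,
    (Finset.card_equiv (simpleSwap l h) (by simp)).trans w.2⟩

end Shuffles

/-! ### Spanning of `R(m+n)` by the `τ_w` of the shuffles `w` -/

section Diagonal

variable {k : Type} [Field k] {I : Type} [Fintype I] [DecidableEq I] (C : CartanDatum k I)
  {N : ℕ}

section Membership

variable {A : Type} [Ring A] [Algebra k A] {S : Subalgebra k A} {u v w : A}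

theorem Qel_mem (hu : u ∈ S) (hv : v ∈ S) (i j : I) : Qel C i j u v ∈ S :=
  map_Qel C S.val i j ⟨u, hu⟩ ⟨v, hv⟩ ▸ SetLike.coe_mem _

theorem Qdiff_mem (hu : u ∈ S) (hv : v ∈ S) (hw : w ∈ S) (i j : I) : Qdiff C i j u v w ∈ S :=
  map_Qdiff C S.val i j ⟨u, hu⟩ ⟨v, hv⟩ ⟨w, hw⟩ ▸ SetLike.coe_mem _

end Membership

variable (N) in
/-- The subalgebra of `R(N)` generated by the `x_a` and the `e(ν)`. -/
noncomputable def diagonal : Subalgebra k (Alg C N) :=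
  Algebra.adjoin k (Set.range (Xx C) ∪ Set.range (Ee C))

theorem Xx_mem_diagonal (a : Fin N) : Xx C a ∈ diagonal C N :=
  Algebra.subset_adjoin (.inl ⟨a, rfl⟩)

theorem Ee_mem_diagonal (ν : Fin N → I) : Ee C ν ∈ diagonal C N :=
  Algebra.subset_adjoin (.inr ⟨ν, rfl⟩)

variable {C}

theorem mem_diagonal_of_mul_e_mem {r : Alg C N} (h : ∀ ν, r * Ee C ν ∈ diagonal C N) :
    r ∈ diagonal C N := by
  have hsum : ∑ ν, r * Ee C ν = r := by
    rw [← Finset.mul_sum]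
    exact (congrArg (r * ·) (generators C N).sum_e).trans (mul_one r)
  exact hsum ▸ sum_mem fun ν _ => h ν

variable (C)

theorem Tt_sq_mem_diagonal (l : ℕ) (h : l + 1 < N) : Tt C l h ^ 2 ∈ diagonal C N :=
  mem_diagonal_of_mul_e_mem fun ν => (generators C N).t_sq_mul_e l h ν ▸
    mul_mem (Qel_mem C (Xx_mem_diagonal C _) (Xx_mem_diagonal C _) _ _) (Ee_mem_diagonal C ν)

theorem Tt_mul_Xx_sub_mem_diagonal (l : ℕ) (h : l + 1 < N) (a : Fin N) :
    Tt C l h * Xx C a - Xx C (simpleSwap l h a) * Tt C l h ∈ diagonal C N :=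
  mem_diagonal_of_mul_e_mem fun ν => (generators C N).t_mul_x_mul_e l h a ν ▸
    zsmul_mem (Ee_mem_diagonal C ν) _

theorem braid_mem_diagonal (l : ℕ) (h : l + 1 < N) (l' : ℕ) (h' : l' + 1 < N)
    (hll : l' = l + 1 ∨ l = l' + 1) :
    Tt C l h * Tt C l' h' * Tt C l h - Tt C l' h' * Tt C l h * Tt C l' h' ∈ diagonal C N := by
  wlog hl : l = l' + 1 generalizing l l'
  · exact neg_sub (Tt C l' h' * _ * _) _ ▸ neg_mem (this l' h' l h hll.symm (hll.resolve_right hl))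
  subst hl
  refine mem_diagonal_of_mul_e_mem fun ν => (generators C N).braid_mul_e l' h ν ▸
    mul_mem ?_ (Ee_mem_diagonal C ν)
  split_ifs
  · exact Qdiff_mem C (Xx_mem_diagonal C _) (Xx_mem_diagonal C _) (Xx_mem_diagonal C _) _ _
  · exact zero_mem _

end Diagonal

section RightStabilizer

variable {k : Type} [Field k] {I : Type} [Fintype I] [DecidableEq I] {C : CartanDatum k I}
  {N : ℕ}

/-- The subalgebra of the elements whose right multiplication preserves `V`. -/
def rightStabilizer {A : Type} [Ring A] [Algebra k A] (V : Submodule k A) : Subalgebra k A where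
  carrier := {r | ∀ v ∈ V, v * r ∈ V}
  mul_mem' hr hs v hv := mul_assoc v _ _ ▸ hs _ (hr v hv)
  add_mem' hr hs v hv := mul_add v _ _ ▸ add_mem (hr v hv) (hs v hv)
  algebraMap_mem' c v hv := by
    rw [← Algebra.commutes, ← Algebra.smul_def]
    exact V.smul_mem c hv

theorem eq_top_of_generators_mem_rightStabilizer {V : Submodule k (Alg C N)} (hone : 1 ∈ V)
    (he : ∀ ν, Ee C ν ∈ rightStabilizer V) (hx : ∀ a, Xx C a ∈ rightStabilizer V)
    (ht : ∀ l h, Tt C l h ∈ rightStabilizer V) : V = ⊤ := by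
  refine (Submodule.eq_top_iff').2 fun r => ?_
  have hr : r ∈ rightStabilizer V := eq_top_of_generators_mem he hx ht ▸ Algebra.mem_top
  exact one_mul r ▸ hr 1 hone

end RightStabilizer

section TauWord

variable {k : Type} [Field k] {I : Type} [Fintype I] [DecidableEq I] (C : CartanDatum k I)
  {N : ℕ}

open Classical in
/-- The element `τ_w` of `R(N)` attached to a word `w`: the product of the `τ_l` along any
sequence of descents sorting `w`. -/
noncomputable def tauWord (w : Fin N → Bool) : Alg C N :=
  if hw : ∃ l h, IsDescent w l h then
    tauWord (w ∘ simpleSwap hw.choose hw.choose_spec.choose) *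
      Tt C hw.choose hw.choose_spec.choose
  else 1
termination_by weight w
decreasing_by
  exact Nat.lt_of_succ_le hw.choose_spec.choose_spec.weight_comp_simpleSwap.le

theorem tauWord_eq_one {w : Fin N → Bool} (hw : ∀ l h, ¬IsDescent w l h) : tauWord C w = 1 := by
  rw [tauWord, dif_neg fun ⟨l, h, hd⟩ => hw l h hd]

theorem commute_Tt {l l' : ℕ} {h : l + 1 < N} {h' : l' + 1 < N}
    (hll : l + 1 < l' ∨ l' + 1 < l) : Commute (Tt C l h) (Tt C l' h') :=
  hll.elim ((generators C N).commute_t l h l' h') fun hll =>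
    ((generators C N).commute_t l' h' l h hll).symm

/-- Two distinct descents are far apart, so that the order in which they are removed does not
matter. -/
theorem tauWord_of_isDescent {w : Fin N → Bool} {l : ℕ} {h : l + 1 < N}
    (hd : IsDescent w l h) : tauWord C w = tauWord C (w ∘ simpleSwap l h) * Tt C l h := by
  induction hW : weight w using Nat.strong_induction_on generalizing w l h with
  | _ W ih =>
    have hw : ∃ l h, IsDescent w l h := ⟨l, h, hd⟩
    obtain ⟨r, hr, hdr, hdef⟩ : ∃ r hr, IsDescent w r hr ∧
        tauWord C w = tauWord C (w ∘ simpleSwap r hr) * Tt C r hr :=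
      ⟨_, _, hw.choose_spec.choose_spec, by rw [tauWord, dif_pos hw]⟩
    rcases eq_or_ne l r with rfl | hlr
    · exact hdef
    have hfar := hd.far_of_ne hdr hlr
    have hlt {l : ℕ} {h : l + 1 < N} (hd : IsDescent w l h) : weight (w ∘ simpleSwap l h) < W :=
      hW ▸ Nat.lt_of_succ_le hd.weight_comp_simpleSwap.le
    rw [hdef, ih _ (hlt hdr) (hd.comp_simpleSwap_of_far hfar) rfl,
      ih _ (hlt hd) (hdr.comp_simpleSwap_of_far hfar.symm) rfl, mul_assoc, mul_assoc,
      commute_Tt C hfar, comp_simpleSwap_comm w hfar]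

end TauWord

section Filtration

variable {k : Type} [Field k] {I : Type} [Fintype I] [DecidableEq I] (C : CartanDatum k I)
  {m n : ℕ}

theorem Xx_mem_range_tensorHom (a : Fin (m + n)) : Xx C a ∈ (tensorHom C m n).range := by
  induction a using Fin.addCases with
  | left a => exact ⟨Xx C a ⊗ₜ 1, by simp⟩
  | right a => exact ⟨1 ⊗ₜ Xx C a, by simp⟩

theorem Ee_mem_range_tensorHom (ν : Fin (m + n) → I) : Ee C ν ∈ (tensorHom C m n).range :=
  ⟨Ee C (fun a => ν (Fin.castAdd n a)) ⊗ₜ Ee C (fun a => ν (Fin.natAdd m a)), by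
    rw [AlgHom.toRingHom_eq_coe, RingHom.coe_coe, tensorHom_tmul, inlHom_e_mul_inrHom_e,
      Fin.append_castAdd_natAdd]⟩

theorem Tt_mem_range_tensorHom {l : ℕ} {h : l + 1 < m + n} (hl : l + 1 < m ∨ m ≤ l) :
    Tt C l h ∈ (tensorHom C m n).range := by
  rcases hl with hl | hl
  · exact ⟨Tt C l hl ⊗ₜ 1, by simp⟩
  · obtain ⟨l, rfl⟩ := Nat.exists_eq_add_of_le hl
    exact ⟨1 ⊗ₜ Tt C l (by omega), by simp⟩

variable (m n) in
/-- The span of the left multiples under `ι` of the `τ_w`, for the shuffles `w` of weight at most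
`j`. -/
def shuffleFiltration (j : ℕ) : Submodule k (Alg C (m + n)) :=
  Submodule.span k
    {z | ∃ (s : Alg C m ⊗[k] Alg C n) (w : Shuffle m n),
      weight w.1 ≤ j ∧ tensorHom C m n s * tauWord C w.1 = z}

variable {C}

theorem tauWord_mem_shuffleFiltration (w : Shuffle m n) :
    tauWord C w.1 ∈ shuffleFiltration C m n (weight w.1) :=
  Submodule.subset_span ⟨1, w, le_rfl, by rw [map_one, one_mul]⟩

theorem shuffleFiltration_mono : Monotone (shuffleFiltration C m n) := fun _ _ hij =>
  Submodule.span_mono fun _ ⟨s, w, hw, hz⟩ => ⟨s, w, hw.trans hij, hz⟩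

theorem tensorHom_mul_mem_shuffleFiltration {j : ℕ} (s : Alg C m ⊗[k] Alg C n)
    {z : Alg C (m + n)} (hz : z ∈ shuffleFiltration C m n j) :
    tensorHom C m n s * z ∈ shuffleFiltration C m n j := by
  induction hz using Submodule.span_induction with
  | mem z hz =>
    obtain ⟨s', w, hw, rfl⟩ := hz
    exact Submodule.subset_span ⟨s * s', w, hw, by rw [map_mul, mul_assoc]⟩
  | zero => rw [mul_zero]; exact zero_mem _
  | add z z' _ _ hz hz' => rw [mul_add]; exact add_mem hz hz'
  | smul c z _ hz => rw [mul_smul_comm]; exact Submodule.smul_mem _ c hz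

theorem mul_mem_shuffleFiltration {j j' : ℕ} {r : Alg C (m + n)}
    (hr : ∀ w : Shuffle m n, weight w.1 ≤ j → tauWord C w.1 * r ∈ shuffleFiltration C m n j')
    {z : Alg C (m + n)} (hz : z ∈ shuffleFiltration C m n j) :
    z * r ∈ shuffleFiltration C m n j' := by
  induction hz using Submodule.span_induction with
  | mem z hz =>
    obtain ⟨s, w, hw, rfl⟩ := hz
    rw [mul_assoc]
    exact tensorHom_mul_mem_shuffleFiltration s (hr w hw)
  | zero => rw [zero_mul]; exact zero_mem _
  | add z z' _ _ hz hz' => rw [add_mul]; exact add_mem hz hz'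
  | smul c z _ hz => rw [smul_mul_assoc]; exact Submodule.smul_mem _ c hz

variable (C) in
/-- The compatibilities of right multiplication on `τ_w` with the filtration. -/
structure IsStable (w : Shuffle m n) : Prop where
  mul_x : ∀ a, tauWord C w.1 * Xx C a ∈ shuffleFiltration C m n (weight w.1)
  mul_e : ∀ ν, tauWord C w.1 * Ee C ν ∈ shuffleFiltration C m n (weight w.1)
  mul_t : ∀ l h, tauWord C w.1 * Tt C l h ∈ shuffleFiltration C m n (weight w.1 + 1)
  mul_t_of_eq : ∀ l h, w.1 ⟨l, Nat.lt_of_succ_lt h⟩ = w.1 ⟨l + 1, h⟩ →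
    tauWord C w.1 * Tt C l h ∈ shuffleFiltration C m n (weight w.1)

section Stable

variable {j : ℕ}

theorem diagonal_le_rightStabilizer
    (hj : ∀ w : Shuffle m n, weight w.1 ≤ j → IsStable C w) :
    diagonal C (m + n) ≤ rightStabilizer (shuffleFiltration C m n j) := by
  refine Algebra.adjoin_le ?_
  rintro _ (⟨a, rfl⟩ | ⟨ν, rfl⟩) z
  · exact mul_mem_shuffleFiltration fun w hw => shuffleFiltration_mono hw ((hj w hw).mul_x a)
  · exact mul_mem_shuffleFiltration fun w hw => shuffleFiltration_mono hw ((hj w hw).mul_e ν)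

theorem mul_Tt_mem_shuffleFiltration
    (hj : ∀ w : Shuffle m n, weight w.1 ≤ j → IsStable C w) (l : ℕ) (h : l + 1 < m + n)
    {z : Alg C (m + n)} (hz : z ∈ shuffleFiltration C m n j) :
    z * Tt C l h ∈ shuffleFiltration C m n (j + 1) :=
  mul_mem_shuffleFiltration (fun w hw =>
    shuffleFiltration_mono (Nat.succ_le_succ hw) ((hj w hw).mul_t l h)) hz

end Stable

theorem Shuffle.eq_base {w : Shuffle m n} (hw : ∀ l h, ¬IsDescent w.1 l h) :
    w = Shuffle.base m n :=
  Subtype.ext <| eq_of_monotone_of_card_eq (monotone_of_forall_not_isDescent hw)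
    Shuffle.monotone_base (w.2.trans (Shuffle.base m n).2.symm)

theorem tauWord_base : tauWord C (Shuffle.base m n).1 = 1 :=
  tauWord_eq_one C fun l h hd => by
    have hle : (Shuffle.base m n).1 ⟨l, Nat.lt_of_succ_lt h⟩ ≤ (Shuffle.base m n).1 ⟨l + 1, h⟩ :=
      Shuffle.monotone_base (Fin.mk_le_mk.2 l.le_succ)
    exact absurd (Bool.le_iff_imp.1 hle hd.1) (Bool.eq_false_iff.1 hd.2)

theorem range_tensorHom_le_shuffleFiltration {j : ℕ} (hj : weight (Shuffle.base m n).1 ≤ j)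
    {r : Alg C (m + n)} (hr : r ∈ (tensorHom C m n).range) : r ∈ shuffleFiltration C m n j := by
  obtain ⟨s, rfl⟩ := hr
  exact Submodule.subset_span ⟨s, Shuffle.base m n, hj, by rw [tauWord_base, mul_one]; rfl⟩

theorem tauWord_base_mul_Tt_mem {l : ℕ} {h : l + 1 < m + n}
    (heq : (Shuffle.base m n).1 ⟨l, Nat.lt_of_succ_lt h⟩ = (Shuffle.base m n).1 ⟨l + 1, h⟩) :
    tauWord C (Shuffle.base m n).1 * Tt C l h ∈
      shuffleFiltration C m n (weight (Shuffle.base m n).1) := by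
  rw [tauWord_base, one_mul]
  have hiff : m ≤ l ↔ m ≤ l + 1 := decide_eq_decide.1 heq
  exact range_tensorHom_le_shuffleFiltration le_rfl (Tt_mem_range_tensorHom C (by omega))

section DescentStep

variable {w : Shuffle m n} {r : ℕ} {hr : r + 1 < m + n}

theorem tauWord_mul_Xx_mem (hd : IsDescent w.1 r hr)
    (hlow : ∀ v : Shuffle m n, weight v.1 < weight w.1 → IsStable C v) (a : Fin (m + n)) :
    tauWord C w.1 * Xx C a ∈ shuffleFiltration C m n (weight w.1) := by
  have hwt : weight (w.swap r hr).1 + 1 = weight w.1 := hd.weight_comp_simpleSwap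
  have hj (v : Shuffle m n) (hv : weight v.1 ≤ weight (w.swap r hr).1) : IsStable C v :=
    hlow v (by omega)
  have hsplit : tauWord C w.1 * Xx C a =
      tauWord C (w.swap r hr).1 * Xx C (simpleSwap r hr a) * Tt C r hr +
        tauWord C (w.swap r hr).1 *
          (Tt C r hr * Xx C a - Xx C (simpleSwap r hr a) * Tt C r hr) := by
    rw [tauWord_of_isDescent C hd, mul_sub]
    simp only [Shuffle.swap, mul_assoc, add_sub_cancel]
  rw [hsplit]
  refine add_mem ?_ ?_
  · exact hwt ▸ mul_Tt_mem_shuffleFiltration hj r hr ((hj _ le_rfl).mul_x _)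
  · exact shuffleFiltration_mono (by omega) <| diagonal_le_rightStabilizer hj
      (Tt_mul_Xx_sub_mem_diagonal C r hr a) _ (tauWord_mem_shuffleFiltration _)

theorem tauWord_mul_Ee_mem (hd : IsDescent w.1 r hr)
    (hlow : ∀ v : Shuffle m n, weight v.1 < weight w.1 → IsStable C v) (ν : Fin (m + n) → I) :
    tauWord C w.1 * Ee C ν ∈ shuffleFiltration C m n (weight w.1) := by
  have hwt : weight (w.swap r hr).1 + 1 = weight w.1 := hd.weight_comp_simpleSwap
  have hj (v : Shuffle m n) (hv : weight v.1 ≤ weight (w.swap r hr).1) : IsStable C v :=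
    hlow v (by omega)
  have hte : Tt C r hr * Ee C ν = Ee C (ν ∘ simpleSwap r hr) * Tt C r hr :=
    (generators C (m + n)).t_mul_e r hr ν
  rw [tauWord_of_isDescent C hd, mul_assoc, hte, ← mul_assoc, ← hwt]
  exact mul_Tt_mem_shuffleFiltration hj r hr ((hj _ le_rfl).mul_e _)

theorem tauWord_mul_Tt_mem_of_far (hd : IsDescent w.1 r hr)
    (hlow : ∀ v : Shuffle m n, weight v.1 < weight w.1 → IsStable C v) {l : ℕ}
    {h : l + 1 < m + n} (hfar : r + 1 < l ∨ l + 1 < r)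
    (heq : w.1 ⟨l, Nat.lt_of_succ_lt h⟩ = w.1 ⟨l + 1, h⟩) :
    tauWord C w.1 * Tt C l h ∈ shuffleFiltration C m n (weight w.1) := by
  have hwt : weight (w.swap r hr).1 + 1 = weight w.1 := hd.weight_comp_simpleSwap
  have hj (v : Shuffle m n) (hv : weight v.1 ≤ weight (w.swap r hr).1) : IsStable C v :=
    hlow v (by omega)
  rw [tauWord_of_isDescent C hd, mul_assoc, commute_Tt C hfar, ← mul_assoc, ← hwt]
  refine mul_Tt_mem_shuffleFiltration hj r hr ((hj _ le_rfl).mul_t_of_eq l h ?_)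
  change (w.1 ∘ simpleSwap r hr) _ = (w.1 ∘ simpleSwap r hr) _
  rw [comp_simpleSwap_of_ne w.1 (by dsimp only; omega) (by dsimp only; omega),
    comp_simpleSwap_of_ne w.1 (by dsimp only; omega) (by dsimp only; omega), heq]

/-- With `v = w s_r s_l`, one has `τ_w τ_l = τ_v τ_l τ_r τ_l`, which the braid relation turns into
`τ_v τ_r τ_l τ_r`, where `τ_v τ_r` does not raise the weight. -/
theorem tauWord_mul_Tt_mem_of_near (hd : IsDescent w.1 r hr)
    (hlow : ∀ v : Shuffle m n, weight v.1 < weight w.1 → IsStable C v) {l : ℕ}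
    {h : l + 1 < m + n} (hnear : l = r + 1 ∨ r = l + 1)
    (heq : w.1 ⟨l, Nat.lt_of_succ_lt h⟩ = w.1 ⟨l + 1, h⟩) :
    tauWord C w.1 * Tt C l h ∈ shuffleFiltration C m n (weight w.1) := by
  have hd' : IsDescent (w.swap r hr).1 l h := hd.comp_simpleSwap_of_near hnear heq
  have hwt : weight (w.swap r hr).1 + 1 = weight w.1 := hd.weight_comp_simpleSwap
  let v := (w.swap r hr).swap l h
  have hwt' : weight v.1 + 1 = weight (w.swap r hr).1 := hd'.weight_comp_simpleSwap
  have hj {i : ℕ} (hi : i < weight w.1) (u : Shuffle m n) (hu : weight u.1 ≤ i) : IsStable C u :=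
    hlow u (by omega)
  have hτ : tauWord C w.1 = tauWord C v.1 * Tt C l h * Tt C r hr := by
    rw [tauWord_of_isDescent C hd]
    exact congrArg (· * _) (tauWord_of_isDescent C hd')
  have hsplit : tauWord C w.1 * Tt C l h =
      tauWord C v.1 * Tt C r hr * Tt C l h * Tt C r hr +
        tauWord C v.1 * (Tt C l h * Tt C r hr * Tt C l h - Tt C r hr * Tt C l h * Tt C r hr) := by
    rw [hτ, mul_sub]
    simp only [mul_assoc, add_sub_cancel]
  rw [hsplit]
  refine add_mem ?_ ?_
  · rw [← hwt, ← hwt']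
    exact mul_Tt_mem_shuffleFiltration (hj (by omega)) r hr <|
      mul_Tt_mem_shuffleFiltration (hj (by omega)) l h <|
        (hlow v (by omega)).mul_t_of_eq r hr (hd.apply_eq_of_near hnear heq)
  · exact shuffleFiltration_mono (by omega) <| diagonal_le_rightStabilizer (hj (by omega))
      (braid_mem_diagonal C l h r hr hnear.symm) _ (tauWord_mem_shuffleFiltration v)

theorem tauWord_mul_Tt_mem_of_isDescent (hd : IsDescent w.1 r hr)
    (hlow : ∀ v : Shuffle m n, weight v.1 < weight w.1 → IsStable C v) :
    tauWord C w.1 * Tt C r hr ∈ shuffleFiltration C m n (weight w.1 + 1) := by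
  have hwt : weight (w.swap r hr).1 + 1 = weight w.1 := hd.weight_comp_simpleSwap
  rw [tauWord_of_isDescent C hd, mul_assoc, ← sq]
  exact shuffleFiltration_mono (by omega) <|
    diagonal_le_rightStabilizer (fun v hv => hlow v (by omega)) (Tt_sq_mem_diagonal C r hr) _
      (tauWord_mem_shuffleFiltration (w.swap r hr))

end DescentStep

theorem tauWord_mul_Tt_mem_of_lt {w : Shuffle m n} {l : ℕ} {h : l + 1 < m + n}
    (hl : w.1 ⟨l, Nat.lt_of_succ_lt h⟩ = false) (hl' : w.1 ⟨l + 1, h⟩ = true) :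
    tauWord C w.1 * Tt C l h ∈ shuffleFiltration C m n (weight w.1 + 1) := by
  have hd := isDescent_comp_simpleSwap hl hl'
  have hwt := hd.weight_comp_simpleSwap
  have hτ := tauWord_of_isDescent C hd
  rw [comp_simpleSwap_comp_simpleSwap] at hwt hτ
  rw [← hτ, hwt]
  exact tauWord_mem_shuffleFiltration (w.swap l h)

theorem tauWord_mul_Tt_mem_of_eq {w : Shuffle m n}
    (hlow : ∀ v : Shuffle m n, weight v.1 < weight w.1 → IsStable C v) {l : ℕ}
    {h : l + 1 < m + n} (heq : w.1 ⟨l, Nat.lt_of_succ_lt h⟩ = w.1 ⟨l + 1, h⟩) :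
    tauWord C w.1 * Tt C l h ∈ shuffleFiltration C m n (weight w.1) := by
  by_cases hw : ∀ l h, ¬IsDescent w.1 l h
  · obtain rfl := Shuffle.eq_base hw
    exact tauWord_base_mul_Tt_mem heq
  push Not at hw
  obtain ⟨r, hr, hd⟩ := hw
  by_cases hfar : r + 1 < l ∨ l + 1 < r
  · exact tauWord_mul_Tt_mem_of_far hd hlow hfar heq
  have hne : l ≠ r := by
    rintro rfl
    exact Bool.false_ne_true (hd.2.symm.trans (heq.symm.trans hd.1))
  exact tauWord_mul_Tt_mem_of_near hd hlow (by omega) heq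

theorem isStable (w : Shuffle m n) : IsStable C w := by
  induction hW : weight w.1 using Nat.strong_induction_on generalizing w with
  | _ W ih =>
    subst hW
    have hlow (v : Shuffle m n) (hv : weight v.1 < weight w.1) : IsStable C v := ih _ hv v rfl
    have hdescent : (∀ l h, ¬IsDescent w.1 l h) ∨ ∃ r hr, IsDescent w.1 r hr := by
      simpa only [← not_exists] using (em (∃ r hr, IsDescent w.1 r hr)).symm
    refine ⟨fun a => ?_, fun ν => ?_, fun l h => ?_, fun l h => tauWord_mul_Tt_mem_of_eq hlow⟩
    · rcases hdescent with hw | ⟨r, hr, hd⟩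
      · rw [Shuffle.eq_base hw, tauWord_base, one_mul]
        exact range_tensorHom_le_shuffleFiltration le_rfl (Xx_mem_range_tensorHom C a)
      · exact tauWord_mul_Xx_mem hd hlow a
    · rcases hdescent with hw | ⟨r, hr, hd⟩
      · rw [Shuffle.eq_base hw, tauWord_base, one_mul]
        exact range_tensorHom_le_shuffleFiltration le_rfl (Ee_mem_range_tensorHom C ν)
      · exact tauWord_mul_Ee_mem hd hlow ν
    · rcases hl : w.1 ⟨l, Nat.lt_of_succ_lt h⟩ <;> rcases hl' : w.1 ⟨l + 1, h⟩
      · exact shuffleFiltration_mono (Nat.le_succ _)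
          (tauWord_mul_Tt_mem_of_eq hlow (hl.trans hl'.symm))
      · exact tauWord_mul_Tt_mem_of_lt hl hl'
      · exact tauWord_mul_Tt_mem_of_isDescent ⟨hl, hl'⟩ hlow
      · exact shuffleFiltration_mono (Nat.le_succ _)
          (tauWord_mul_Tt_mem_of_eq hlow (hl.trans hl'.symm))

theorem iSup_shuffleFiltration : ⨆ j, shuffleFiltration C m n j = ⊤ := by
  have mem_iSup {z : Alg C (m + n)} :
      z ∈ ⨆ j, shuffleFiltration C m n j ↔ ∃ j, z ∈ shuffleFiltration C m n j :=
    Submodule.mem_iSup_of_directed _ shuffleFiltration_mono.directed_le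
  have hstable (j : ℕ) : diagonal C (m + n) ≤ rightStabilizer (shuffleFiltration C m n j) :=
    diagonal_le_rightStabilizer fun w _ => isStable w
  refine eq_top_of_generators_mem_rightStabilizer ?_ (fun ν z hz => ?_) (fun a z hz => ?_)
    (fun l h z hz => ?_)
  · exact mem_iSup.2 ⟨_, tauWord_base (C := C) (m := m) (n := n) ▸ tauWord_mem_shuffleFiltration _⟩
  all_goals obtain ⟨j, hz⟩ := mem_iSup.1 hz
  · exact mem_iSup.2 ⟨j, hstable j (Ee_mem_diagonal C ν) z hz⟩
  · exact mem_iSup.2 ⟨j, hstable j (Xx_mem_diagonal C a) z hz⟩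
  · exact mem_iSup.2 ⟨j + 1, mul_Tt_mem_shuffleFiltration (fun w _ => isStable w) l h hz⟩

end Filtration

section ShuffleCombination

variable {k : Type} [Field k] {I : Type} [Fintype I] [DecidableEq I] (C : CartanDatum k I)
  {m n : ℕ}

variable (m n) in
/-- The combination `∑_w ι(c_w) τ_w`, over the shuffles `w`, with coefficients in
`R(m) ⊗ R(n)`. -/
noncomputable def shuffleCombination :
    (Shuffle m n → Alg C m ⊗[k] Alg C n) →ₗ[k] Alg C (m + n) :=
  ∑ w : Shuffle m n, LinearMap.mulRight k (tauWord C w.1) ∘ₗ (tensorHom C m n).toLinearMap ∘ₗ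
    LinearMap.proj w

theorem shuffleCombination_apply (c : Shuffle m n → Alg C m ⊗[k] Alg C n) :
    shuffleCombination C m n c = ∑ w, tensorHom C m n (c w) * tauWord C w.1 := by
  simp [shuffleCombination]

theorem shuffleCombination_single (w : Shuffle m n) (s : Alg C m ⊗[k] Alg C n) :
    shuffleCombination C m n (Pi.single w s) = tensorHom C m n s * tauWord C w.1 := by
  rw [shuffleCombination_apply, Fintype.sum_eq_single w fun w' hw' => by simp [hw'],
    Pi.single_eq_same]

theorem shuffleCombination_surjective : Function.Surjective (shuffleCombination C m n) := by
  rw [← LinearMap.range_eq_top, eq_top_iff, ← iSup_shuffleFiltration]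
  refine iSup_le fun j => Submodule.span_le.2 ?_
  rintro _ ⟨s, w, -, rfl⟩
  exact ⟨Pi.single w s, shuffleCombination_single C w s⟩

end ShuffleCombination

/-! ### Freeness -/

section Tensor

variable {k : Type} [Field k] {I : Type} [Fintype I] [DecidableEq I] (C : CartanDatum k I)
  {m n : ℕ}

variable (m n) in
/-- The elements `x_1 ⊗ 1, …, x_m ⊗ 1, 1 ⊗ x_1, …, 1 ⊗ x_n`. -/
noncomputable def tensorX : Fin (m + n) → Alg C m ⊗[k] Alg C n :=
  Fin.append (fun a => Xx C a ⊗ₜ 1) (fun a => 1 ⊗ₜ Xx C a)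

theorem commute_tensorX (a b : Fin (m + n)) :
    Commute (tensorX C m n a) (tensorX C m n b) := by
  induction a using Fin.addCases <;> induction b using Fin.addCases <;>
    simp [tensorX, commute_iff_eq, (commute_Xx _ _).eq]

theorem commEval_tensorX_castAdd (p : MvPolynomial (Fin m) k) :
    commEval (tensorX C m n) (commute_tensorX C) (MvPolynomial.rename (Fin.castAdd n) p) =
      commEval (Xx C) commute_Xx p ⊗ₜ 1 :=
  DFunLike.congr_fun (MvPolynomial.algHom_ext
    (f := (commEval _ (commute_tensorX C)).comp (MvPolynomial.rename _))
    (g := Algebra.TensorProduct.includeLeft.comp (commEval (Xx C) commute_Xx))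
    fun a => by simp [tensorX]) p

theorem commEval_tensorX_natAdd (p : MvPolynomial (Fin n) k) :
    commEval (tensorX C m n) (commute_tensorX C) (MvPolynomial.rename (Fin.natAdd m) p) =
      1 ⊗ₜ commEval (Xx C) commute_Xx p :=
  DFunLike.congr_fun (MvPolynomial.algHom_ext
    (f := (commEval _ (commute_tensorX C)).comp (MvPolynomial.rename _))
    (g := (Algebra.TensorProduct.includeRight : Alg C n →ₐ[k] Alg C m ⊗[k] Alg C n).comp
      (commEval (Xx C) commute_Xx))
    fun a => by simp [tensorX]) p

variable (m n) in
/-- The map `⨁_ν k[X_1, …, X_{m+n}] e(ν) → R(m) ⊗ R(n)` lifting `polyMap` along `ι`. -/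
noncomputable def tensorPolyMap : LabelledPoly k I (m + n) →ₗ[k] Alg C m ⊗[k] Alg C n :=
  labelledEval (fun ν => Ee C (ν ∘ Fin.castAdd n) ⊗ₜ Ee C (ν ∘ Fin.natAdd m)) (tensorX C m n)
    (commute_tensorX C)

theorem tensorHom_tensorPolyMap (f : LabelledPoly k I (m + n)) :
    tensorHom C m n (tensorPolyMap C m n f) = polyMap C (m + n) f := by
  have he : (tensorHom C m n ∘ fun ν => Ee C (ν ∘ Fin.castAdd n) ⊗ₜ Ee C (ν ∘ Fin.natAdd m)) =
      Ee C := funext fun ν => by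
    rw [Function.comp_apply, tensorHom_tmul, inlHom_e_mul_inrHom_e]
    exact congrArg (Ee C) (Fin.append_castAdd_natAdd)
  have hx : tensorHom C m n ∘ tensorX C m n = Xx C := funext fun a => by
    induction a using Fin.addCases <;> simp [tensorX]
  simp only [tensorPolyMap, map_labelledEval, polyMap, he, hx]

theorem polyMap_tmul_polyMap (f : LabelledPoly k I m) (f' : LabelledPoly k I n) :
    polyMap C m f ⊗ₜ polyMap C n f' = tensorPolyMap C m n fun ν =>
      MvPolynomial.rename (Fin.castAdd n) (f (ν ∘ Fin.castAdd n)) *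
        MvPolynomial.rename (Fin.natAdd m) (f' (ν ∘ Fin.natAdd m)) := by
  simp only [polyMap, tensorPolyMap, labelledEval_apply, map_mul, commEval_tensorX_castAdd,
    commEval_tensorX_natAdd, TensorProduct.sum_tmul, TensorProduct.tmul_sum,
    Algebra.TensorProduct.tmul_mul_tmul, one_mul, mul_one]
  rw [← Equiv.sum_comp (Fin.appendEquiv m n), Fintype.sum_prod_type, Finset.sum_comm]
  refine Finset.sum_congr rfl fun ν _ => Finset.sum_congr rfl fun ν' _ => ?_
  have hν : Fin.append ν ν' ∘ Fin.castAdd n = ν := funext fun a => Fin.append_left ν ν' a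
  have hν' : Fin.append ν ν' ∘ Fin.natAdd m = ν' := funext fun a => Fin.append_right ν ν' a
  simp [Fin.appendEquiv, hν, hν']

end Tensor

section Generating

variable {k : Type} [Field k] {I : Type} [Fintype I] [DecidableEq I] {C : CartanDatum k I}
  {m n : ℕ} {ι ι' : Type} [Fintype ι] [Fintype ι'] {b : ι → Alg C m} {b' : ι' → Alg C n}

theorem IsPolyGenerating.tensor (hb : IsPolyGenerating b) (hb' : IsPolyGenerating b')
    (s : Alg C m ⊗[k] Alg C n) : ∃ g : ι × ι' → LabelledPoly k I (m + n),
      ∑ p, tensorPolyMap C m n (g p) * b p.1 ⊗ₜ b' p.2 = s := by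
  induction s with
  | zero => exact ⟨0, by simp⟩
  | tmul r r' =>
    obtain ⟨f, rfl⟩ := hb r
    obtain ⟨f', rfl⟩ := hb' r'
    refine ⟨fun p ν => MvPolynomial.rename (Fin.castAdd n) (f p.1 (ν ∘ Fin.castAdd n)) *
      MvPolynomial.rename (Fin.natAdd m) (f' p.2 (ν ∘ Fin.natAdd m)), ?_⟩
    simp only [← polyMap_tmul_polyMap, Algebra.TensorProduct.tmul_mul_tmul,
      TensorProduct.sum_tmul, TensorProduct.tmul_sum, Fintype.sum_prod_type]
    exact Finset.sum_comm
  | add s s' hs hs' =>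
    obtain ⟨g, rfl⟩ := hs
    obtain ⟨g', rfl⟩ := hs'
    exact ⟨g + g', by simp [add_mul, Finset.sum_add_distrib]⟩

theorem shuffleCombination_sum_tensorPolyMap_mul
    (g : Shuffle m n → ι × ι' → LabelledPoly k I (m + n)) :
    shuffleCombination C m n (fun w => ∑ p, tensorPolyMap C m n (g w p) * b p.1 ⊗ₜ b' p.2) =
      ∑ q : Shuffle m n × ι × ι', polyMap C (m + n) (g q.1 q.2) *
        (tensorHom C m n (b q.2.1 ⊗ₜ b' q.2.2) * tauWord C q.1.1) := by
  rw [shuffleCombination_apply, Fintype.sum_prod_type]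
  simp only [map_sum, map_mul, tensorHom_tensorPolyMap, Finset.sum_mul, mul_assoc]

theorem IsPolyGenerating.shuffle (hb : IsPolyGenerating b) (hb' : IsPolyGenerating b') :
    IsPolyGenerating fun q : Shuffle m n × ι × ι' =>
      tensorHom C m n (b q.2.1 ⊗ₜ b' q.2.2) * tauWord C q.1.1 := fun r => by
  obtain ⟨c, rfl⟩ := shuffleCombination_surjective C r
  choose g hg using fun w => hb.tensor hb' (c w)
  exact ⟨fun q => g q.1 q.2, by rw [← shuffleCombination_sum_tensorPolyMap_mul, funext hg]⟩

theorem card_shuffle_prod (hι : Fintype.card ι = m.factorial)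
    (hι' : Fintype.card ι' = n.factorial) :
    Fintype.card (Shuffle m n × ι × ι') = (m + n).factorial := by
  rw [Fintype.card_prod, Fintype.card_prod, card_shuffle, hι, hι', ← mul_assoc,
    Nat.add_choose_mul_factorial_mul_factorial]

theorem polyMap_surjective {N : ℕ} (hN : N ≤ 1) : Function.Surjective (polyMap C N) := by
  refine LinearMap.range_eq_top.1 <| eq_top_of_generators_mem_rightStabilizer ?_ (fun ν => ?_)
    (fun a => ?_) (fun l h => by omega)
  · refine ⟨1, ?_⟩
    simpa [polyMap, labelledEval_apply] using (generators C N).sum_e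
  · rintro _ ⟨f, rfl⟩
    refine ⟨Pi.single ν (f ν), ?_⟩
    have he (ν' : Fin N → I) : Ee C ν' * Ee C ν = if ν' = ν then Ee C ν' else 0 :=
      (generators C N).e_mul_e ν' ν
    simp only [polyMap, labelledEval_apply, Finset.sum_mul, mul_assoc, he]
    rw [Fintype.sum_eq_single ν fun ν' h => by simp [h],
      Fintype.sum_eq_single ν fun ν' h => by simp [h]]
    simp
  · rintro _ ⟨f, rfl⟩
    refine ⟨fun ν => f ν * MvPolynomial.X a, ?_⟩
    have hcomm (ν : Fin N → I) : Xx C a * Ee C ν = Ee C ν * Xx C a :=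
      (generators C N).commute_x_e a ν
    simp only [polyMap, labelledEval_apply, Finset.sum_mul, map_mul, commEval_X, mul_assoc, hcomm]

theorem isPolyGenerating_one {N : ℕ} (hN : N ≤ 1) :
    IsPolyGenerating fun _ : Unit => (1 : Alg C N) := fun r => by
  obtain ⟨f, hf⟩ := polyMap_surjective hN r
  exact ⟨fun _ => f, by simpa using hf⟩

variable (C) in
theorem exists_isPolyGenerating (N : ℕ) : ∃ (ι : Type) (_ : Fintype ι) (b : ι → Alg C N),
    IsPolyGenerating b ∧ Fintype.card ι = N.factorial := by
  induction N with
  | zero => exact ⟨Unit, inferInstance, fun _ => 1, isPolyGenerating_one zero_le_one, rfl⟩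
  | succ N ih =>
    obtain ⟨ι, _, b, hb, hcard⟩ := ih
    have hone : IsPolyGenerating fun _ : Unit => (1 : Alg C 1) := isPolyGenerating_one le_rfl
    exact ⟨Shuffle N 1 × ι × Unit, inferInstance, _, hb.shuffle hone,
      card_shuffle_prod hcard rfl⟩

end Generating

section Freeness

theorem free_compHom_of_bijective {ι S R : Type*} [Fintype ι] [Semiring S] [Semiring R]
    (φ : S →+* R) (b : ι → R) (hb : Function.Bijective fun c : ι → S => ∑ i, φ (c i) * b i) :
    letI : Module S R := Module.compHom R φ
    Module.Free S R :=
  let : Module S R := Module.compHom R φ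
  Module.Free.of_equiv (LinearEquiv.ofBijective (Fintype.linearCombination S b) hb)

variable {k : Type} [Field k] {I : Type} [Fintype I] [DecidableEq I] (C : CartanDatum k I)
  (m n : ℕ)

theorem shuffleCombination_injective : Function.Injective (shuffleCombination C m n) := by
  refine (injective_iff_map_eq_zero _).2 fun c hc => ?_
  obtain ⟨ι, _, b, hb, hι⟩ := exists_isPolyGenerating C m
  obtain ⟨ι', _, b', hb', hι'⟩ := exists_isPolyGenerating C n
  choose g hg using fun w => hb.tensor hb' (c w)
  rw [← funext hg, shuffleCombination_sum_tensorPolyMap_mul] at hc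
  have hzero := (hb.shuffle hb').eq_zero (card_shuffle_prod hι hι') hc
  refine funext fun w => ?_
  rw [← hg w, Pi.zero_apply]
  refine Finset.sum_eq_zero fun p _ => ?_
  rw [show g w p = 0 from congrFun hzero (w, p), map_zero, zero_mul]

theorem tensorHom_injective : Function.Injective (tensorHom C m n) := by
  have hbase : tensorHom C m n =
      shuffleCombination C m n ∘ Pi.single (M := fun _ => Alg C m ⊗[k] Alg C n)
        (Shuffle.base m n) := funext fun s => by
    rw [Function.comp_apply, shuffleCombination_single, tauWord_base, mul_one]
  rw [hbase]
  exact (shuffleCombination_injective C m n).comp (Pi.single_injective _)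

theorem free_tensorHom :
    letI : Module (Alg C m ⊗[k] Alg C n) (Alg C (m + n)) :=
      Module.compHom _ (tensorHom C m n).toRingHom
    Module.Free (Alg C m ⊗[k] Alg C n) (Alg C (m + n)) := by
  refine free_compHom_of_bijective (tensorHom C m n).toRingHom
    (fun w : Shuffle m n => tauWord C w.1) ?_
  suffices h : ⇑(shuffleCombination C m n) =
      fun c => ∑ w, tensorHom C m n (c w) * tauWord C w.1 from
    (h ▸ ⟨shuffleCombination_injective C m n, shuffleCombination_surjective C⟩ :
      Function.Bijective _)
  exact funext (shuffleCombination_apply C)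

theorem free_op_tensorHom :
    letI : Module (Alg C m ⊗[k] Alg C n)ᵐᵒᵖ (Alg C (m + n)) :=
      Module.compHom _ (RingHom.op (tensorHom C m n).toRingHom)
    Module.Free (Alg C m ⊗[k] Alg C n)ᵐᵒᵖ (Alg C (m + n)) :=
  free_op_of_free _ (tensorTranspose C m n).toRingEquiv (transpose C (m + n)).toRingEquiv
    (transpose_tensorHom C m n) (free_tensorHom C m n)

end Freeness

end KLR

open KLR in
open scoped TensorProduct in
/-- There is a well-defined algebra homomorphism `ι : R(m) ⊗ R(n) → R(m+n)` given by
`e(ν) ⊗ e(ν′) ↦ e(ν∗ν′)`, `x_a ⊗ 1 ↦ x_a`, `1 ⊗ x_a ↦ x_{m+a}`, `τ_l ⊗ 1 ↦ τ_l`,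
`1 ⊗ τ_l ↦ τ_{m+l}`; moreover `R(m+n)` is free both as a left and as a right module
over `R(m) ⊗ R(n)` via `ι` (in particular `ι` is injective). -/
theorem klr_tensor_embedding {k : Type} [Field k] {I : Type} [Fintype I] [DecidableEq I]
    (C : CartanDatum k I) (m n : ℕ) :
    ∃ ι : (Alg C m ⊗[k] Alg C n) →ₐ[k] Alg C (m + n),
      (∀ (ν : Fin m → I) (ν' : Fin n → I),
        ι (Ee C ν ⊗ₜ[k] Ee C ν') = Ee C (Fin.append ν ν')) ∧
      (∀ a : Fin m, ι (Xx C a ⊗ₜ[k] 1) = Xx C (Fin.castAdd n a)) ∧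
      (∀ a : Fin n, ι ((1 : Alg C m) ⊗ₜ[k] Xx C a) = Xx C (Fin.natAdd m a)) ∧
      (∀ (l : ℕ) (h : l + 1 < m),
        ι (Tt C l h ⊗ₜ[k] 1) = Tt C l (by omega)) ∧
      (∀ (l : ℕ) (h : l + 1 < n),
        ι ((1 : Alg C m) ⊗ₜ[k] Tt C l h) = Tt C (m + l) (by omega)) ∧
      Function.Injective ⇑ι ∧
      (letI : Module (Alg C m ⊗[k] Alg C n) (Alg C (m + n)) :=
          Module.compHom _ ι.toRingHom;
        Module.Free (Alg C m ⊗[k] Alg C n) (Alg C (m + n))) ∧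
      (letI : Module (Alg C m ⊗[k] Alg C n)ᵐᵒᵖ (Alg C (m + n)) :=
          Module.compHom _ (RingHom.op ι.toRingHom : _ →+* (Alg C (m + n))ᵐᵒᵖ);
        Module.Free (Alg C m ⊗[k] Alg C n)ᵐᵒᵖ (Alg C (m + n))) := by
  refine ⟨tensorHom C m n, fun ν ν' => ?_, fun a => ?_, fun a => ?_, fun l h => ?_, fun l h => ?_,
    tensorHom_injective C m n, free_tensorHom C m n, free_op_tensorHom C m n⟩
  · rw [tensorHom_tmul, inlHom_e_mul_inrHom_e]
  all_goals simp
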